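/- arXiv:2602.22081 — 4 statements merged into one kernel-verified Lean document; each statement's English description precedes it below -/
import Mathlib

section
/- Let M, L, w be positive integers with M < w and w ≥ 2. If every prime factor of L is at least 2w - 1, then every MC-CAC of length L and weight w in M channels has at most M(M-1)L/((2w-M)(w-1)) + M(L-1)/(2w-2) codewords. -/
/-- The set of time slots used by codeword `S` on channel `i`. -/
def chan {M L : ℕ} (S : Finset (Fin M × ZMod L)) (i : Fin M) : Finset (ZMod L) :=
  (S.filter fun p => p.1 = i).image Prod.snd

/-- The `(i,j)` set of differences of a codeword `S ⊆ {1,…,M} × Z_L`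
(with `0` removed when `i = j`). -/
def Darr {M L : ℕ} (S : Finset (Fin M × ZMod L)) (i j : Fin M) : Finset (ZMod L) :=
  if i = j then (((chan S i) ×ˢ (chan S j)).image fun p => p.1 - p.2).erase 0
  else ((chan S i) ×ˢ (chan S j)).image fun p => p.1 - p.2

/-- A multichannel conflict-avoiding code of length `L` and weight `w` in `M` channels. -/
def IsMCCAC (M L w : ℕ) (C : Finset (Finset (Fin M × ZMod L))) : Prop :=
  (∀ S ∈ C, S.card = w) ∧
  ∀ S ∈ C, ∀ S' ∈ C, S ≠ S' → ∀ i j : Fin M, Disjoint (Darr S i j) (Darr S' i j)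

/-!
Let `k` be the number of channels met by a codeword `S` of weight `w`. Cauchy–Davenport bounds
each difference set from below, because no nontrivial subgroup of `ZMod L` has fewer than `2w - 1`
elements: the diagonal sets `Darr S i i` have at least `2(w - k)` elements in total, the
off-diagonal ones at least `(k - 1)(2w - k)`. If `k ≤ m`, giving weight `2w - m` to diagonal and
weight `2` to off-diagonal differences makes the total at least
`(2w - m)(2w - 2) + 2(k - 1)(m - k)`, hence at least `(2w - m)(2w - 2)`. Since the difference sets
of distinct codewords are disjoint, a code has at most `M(L - 1)` diagonal and `M(M - 1)L`
off-diagonal differences to share out.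
-/

open Finset
open scoped Pointwise

section AddGroup

variable {G : Type*} [AddGroup G]

lemma le_minOrder_of_forall_prime_dvd_natCard {n : ℕ}
    (hn : ∀ p : ℕ, p.Prime → p ∣ Nat.card G → n ≤ p) : (n : ℕ∞) ≤ AddMonoid.minOrder G := by
  refine AddMonoid.le_minOrder.2 fun a ha hfin ↦ Nat.cast_le.2 ?_
  have hord : addOrderOf a ≠ 1 := mt AddMonoid.addOrderOf_eq_one_iff.1 ha
  calc n ≤ (addOrderOf a).minFac :=
        hn _ (Nat.minFac_prime hord) ((Nat.minFac_dvd _).trans (addOrderOf_dvd_natCard a))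
    _ ≤ addOrderOf a := Nat.minFac_le hfin.addOrderOf_pos

lemma card_add_card_sub_one_le_card_sub [DecidableEq G] {s t : Finset G} (hs : s.Nonempty)
    (ht : t.Nonempty) (hst : ((#s + #t - 1 : ℕ) : ℕ∞) ≤ AddMonoid.minOrder G) :
    #s + #t - 1 ≤ #(s - t) := by
  have hmin := cauchy_davenport_minOrder_add hs ht.neg
  rw [card_neg, min_eq_right hst, ← sub_eq_add_neg] at hmin
  exact Nat.cast_le.1 hmin

end AddGroup

lemma sum_offDiag_add_sub_one {ι R : Type*} [CommRing R] (s : Finset ι)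
    (a : ι → R) :
    ∑ p ∈ s.offDiag, (a p.1 + a p.2 - 1) = (#s - 1) * (2 * ∑ i ∈ s, a i - #s) := by
  classical
  have hsplit := sum_union (f := fun p : ι × ι ↦ a p.1 + a p.2 - 1) (disjoint_diag_offDiag s)
  rw [diag_union_offDiag, sum_product, sum_diag] at hsplit
  simp only [sum_sub_distrib, sum_add_distrib, sum_const, nsmul_eq_mul, mul_one,
    ← mul_sum] at hsplit ⊢
  linear_combination -hsplit

lemma two_mul_sub_min_pos (m : ℕ) {n : ℕ} (hn : 0 < n) :
    (0 : ℝ) < 2 * n - (min m n : ℕ) := by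
  have hmin : ((min m n : ℕ) : ℝ) ≤ n := Nat.cast_le.2 (min_le_right m n)
  linarith [(Nat.cast_pos (α := ℝ)).2 hn]

section Codeword

variable {M L : ℕ} (S : Finset (Fin M × ZMod L))

/-- The channels on which the codeword `S` has at least one time slot; their number is the
parameter `k` of the argument. -/
def usedChannels : Finset (Fin M) := S.image Prod.fst

lemma card_usedChannels_le : #(usedChannels S) ≤ min M #S :=
  le_min (card_finset_fin_le _) card_image_le

lemma card_chan (i : Fin M) : #(chan S i) = #{p ∈ S | p.1 = i} := by
  refine card_image_of_injOn fun p hp q hq hpq ↦ Prod.ext ?_ hpq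
  exact (mem_filter.1 hp).2.trans (mem_filter.1 hq).2.symm

lemma card_chan_le (i : Fin M) : #(chan S i) ≤ #S :=
  (card_chan S i).trans_le (card_filter_le _ _)

lemma sum_card_chan_usedChannels : ∑ i ∈ usedChannels S, #(chan S i) = #S := by
  simp only [card_chan]
  exact (card_eq_sum_card_image Prod.fst S).symm

variable {S}

lemma chan_nonempty_of_mem_usedChannels {i : Fin M} (hi : i ∈ usedChannels S) :
    (chan S i).Nonempty := by
  obtain ⟨p, hp, hpi⟩ := mem_image.1 hi
  exact ⟨p.2, mem_image_of_mem _ (mem_filter.2 ⟨hp, hpi⟩)⟩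

variable (S) in
lemma darr_self (i : Fin M) : Darr S i i = (chan S i - chan S i).erase 0 := by
  rw [Darr, if_pos rfl, image_sub_product]

lemma darr_of_ne {i j : Fin M} (hij : i ≠ j) : Darr S i j = chan S i - chan S j := by
  rw [Darr, if_neg hij, image_sub_product]

lemma card_chan_add_card_chan_le_card_sub_add_one
    (hS : ((2 * #S - 1 : ℕ) : ℕ∞) ≤ AddMonoid.minOrder (ZMod L)) {i j : Fin M}
    (hi : i ∈ usedChannels S) (hj : j ∈ usedChannels S) :
    #(chan S i) + #(chan S j) ≤ #(chan S i - chan S j) + 1 := by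
  have hle : #(chan S i) + #(chan S j) - 1 ≤ 2 * #S - 1 := by
    have := card_chan_le S i
    have := card_chan_le S j
    omega
  exact tsub_le_iff_right.1 <| card_add_card_sub_one_le_card_sub
    (chan_nonempty_of_mem_usedChannels hi) (chan_nonempty_of_mem_usedChannels hj)
    ((Nat.cast_le.2 hle).trans hS)

lemma two_mul_card_chan_le_card_darr_self_add_two
    (hS : ((2 * #S - 1 : ℕ) : ℕ∞) ≤ AddMonoid.minOrder (ZMod L)) {i : Fin M}
    (hi : i ∈ usedChannels S) :
    2 * #(chan S i) ≤ #(Darr S i i) + 2 := by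
  have hsub := card_chan_add_card_chan_le_card_sub_add_one hS hi hi
  have herase : #(chan S i - chan S i) - 1 ≤ #(Darr S i i) :=
    darr_self S i ▸ pred_card_le_card_erase
  omega

lemma two_mul_card_sub_le_sum_card_darr_self
    (hS : ((2 * #S - 1 : ℕ) : ℕ∞) ≤ AddMonoid.minOrder (ZMod L)) :
    2 * ((#S : ℝ) - #(usedChannels S)) ≤ ∑ i, (#(Darr S i i) : ℝ) := by
  have hused : 2 * #S ≤ ∑ i ∈ usedChannels S, #(Darr S i i) + #(usedChannels S) * 2 := by
    calc 2 * #S = ∑ i ∈ usedChannels S, 2 * #(chan S i) := by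
          rw [← mul_sum, sum_card_chan_usedChannels]
      _ ≤ ∑ i ∈ usedChannels S, (#(Darr S i i) + 2) :=
          sum_le_sum fun i hi ↦ two_mul_card_chan_le_card_darr_self_add_two hS hi
      _ = _ := by rw [sum_add_distrib, sum_const, smul_eq_mul]
  have huniv : ∑ i ∈ usedChannels S, #(Darr S i i) ≤ ∑ i, #(Darr S i i) :=
    sum_le_sum_of_subset (subset_univ _)
  have hle : 2 * (#S : ℝ) ≤ ∑ i, (#(Darr S i i) : ℝ) + #(usedChannels S) * 2 := by
    exact_mod_cast hused.trans (Nat.add_le_add_right huniv _)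
  linarith

lemma mul_le_sum_offDiag_card_darr
    (hS : ((2 * #S - 1 : ℕ) : ℕ∞) ≤ AddMonoid.minOrder (ZMod L)) :
    ((#(usedChannels S) : ℝ) - 1) * (2 * #S - #(usedChannels S)) ≤
      ∑ p ∈ univ.offDiag, (#(Darr S p.1 p.2) : ℝ) := by
  calc ((#(usedChannels S) : ℝ) - 1) * (2 * #S - #(usedChannels S))
      = ∑ p ∈ (usedChannels S).offDiag, ((#(chan S p.1) : ℝ) + #(chan S p.2) - 1) := by
        rw [sum_offDiag_add_sub_one _ fun i ↦ (#(chan S i) : ℝ), ← Nat.cast_sum,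
          sum_card_chan_usedChannels]
    _ ≤ ∑ p ∈ (usedChannels S).offDiag, (#(Darr S p.1 p.2) : ℝ) := by
        refine sum_le_sum fun p hp ↦ sub_le_iff_le_add.2 ?_
        obtain ⟨hi, hj, hij⟩ := mem_offDiag.1 hp
        rw [darr_of_ne hij]
        exact_mod_cast card_chan_add_card_chan_le_card_sub_add_one hS hi hj
    _ ≤ ∑ p ∈ univ.offDiag, (#(Darr S p.1 p.2) : ℝ) :=
        sum_le_sum_of_subset_of_nonneg (offDiag_mono (subset_univ _))
          fun _ _ _ ↦ Nat.cast_nonneg _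

lemma mul_le_weighted_sum_card_darr
    (hS : ((2 * #S - 1 : ℕ) : ℕ∞) ≤ AddMonoid.minOrder (ZMod L)) (hne : S.Nonempty) :
    (2 * (#S : ℝ) - (min M #S : ℕ)) * (2 * #S - 2) ≤
      2 * ∑ p ∈ univ.offDiag, (#(Darr S p.1 p.2) : ℝ) +
        (2 * #S - (min M #S : ℕ)) * ∑ i, (#(Darr S i i) : ℝ) := by
  set k := (#(usedChannels S) : ℝ)
  set m := ((min M #S : ℕ) : ℝ)
  have hk : 1 ≤ k := Nat.one_le_cast.2 (hne.image _).card_pos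
  have hkm : k ≤ m := Nat.cast_le.2 (card_usedChannels_le S)
  have hm : 0 < 2 * (#S : ℝ) - m := two_mul_sub_min_pos M hne.card_pos
  calc (2 * (#S : ℝ) - m) * (2 * #S - 2)
      ≤ (2 * #S - m) * (2 * #S - 2) + 2 * ((k - 1) * (m - k)) :=
        le_add_of_nonneg_right <|
          mul_nonneg zero_le_two (mul_nonneg (sub_nonneg.2 hk) (sub_nonneg.2 hkm))
    _ = 2 * ((k - 1) * (2 * #S - k)) + (2 * #S - m) * (2 * (#S - k)) := by ring
    _ ≤ _ := by
        gcongr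
        · exact mul_le_sum_offDiag_card_darr hS
        · exact two_mul_card_sub_le_sum_card_darr_self hS

end Codeword

namespace IsMCCAC

variable {M L w : ℕ} {C : Finset (Finset (Fin M × ZMod L))}

lemma sum_card_darr_eq_card_biUnion (hC : IsMCCAC M L w C) (i j : Fin M) :
    ∑ S ∈ C, #(Darr S i j) = #(C.biUnion fun S ↦ Darr S i j) :=
  (card_biUnion fun S hS S' hS' hne ↦ hC.2 S hS S' hS' hne i j).symm

variable [NeZero L]

lemma sum_card_darr_le (hC : IsMCCAC M L w C) (i j : Fin M) :
    ∑ S ∈ C, #(Darr S i j) ≤ L := by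
  rw [hC.sum_card_darr_eq_card_biUnion]
  exact (card_le_univ _).trans_eq (ZMod.card L)

lemma sum_card_darr_self_le (hC : IsMCCAC M L w C) (i : Fin M) :
    ∑ S ∈ C, #(Darr S i i) ≤ L - 1 := by
  have hzero : (C.biUnion fun S ↦ Darr S i i) ⊆ univ.erase 0 :=
    biUnion_subset.2 fun S _ ↦ darr_self S i ▸ erase_subset_erase 0 (subset_univ _)
  rw [hC.sum_card_darr_eq_card_biUnion]
  refine (card_le_card hzero).trans_eq ?_
  rw [card_erase_of_mem (mem_univ _), card_univ, ZMod.card]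

lemma sum_sum_offDiag_card_darr_le (hC : IsMCCAC M L w C) :
    ∑ S ∈ C, ∑ p ∈ univ.offDiag, (#(Darr S p.1 p.2) : ℝ) ≤ M * (M - 1) * L := by
  rw [sum_comm]
  have hpair : ∀ p ∈ (univ : Finset (Fin M)).offDiag, ∑ S ∈ C, (#(Darr S p.1 p.2) : ℝ) ≤ L :=
    fun p _ ↦ by exact_mod_cast hC.sum_card_darr_le p.1 p.2
  refine (sum_le_card_nsmul _ _ _ hpair).trans_eq ?_
  rw [offDiag_card, card_univ, Fintype.card_fin, nsmul_eq_mul, Nat.cast_sub (Nat.le_mul_self M)]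
  push_cast
  ring

lemma sum_sum_card_darr_self_le (hC : IsMCCAC M L w C) :
    ∑ S ∈ C, ∑ i, (#(Darr S i i) : ℝ) ≤ M * (L - 1) := by
  rw [sum_comm]
  have hchannel : ∀ i ∈ (univ : Finset (Fin M)), ∑ S ∈ C, (#(Darr S i i) : ℝ) ≤ L - 1 :=
    fun i _ ↦ by
      rw [← Nat.cast_pred (NeZero.pos L)]
      exact_mod_cast hC.sum_card_darr_self_le i
  refine (sum_le_card_nsmul _ _ _ hchannel).trans_eq ?_
  rw [card_univ, Fintype.card_fin, nsmul_eq_mul]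

lemma card_mul_le (hC : IsMCCAC M L w C) (hw : 0 < w)
    (hmin : ((2 * w - 1 : ℕ) : ℕ∞) ≤ AddMonoid.minOrder (ZMod L)) :
    (#C : ℝ) * ((2 * w - (min M w : ℕ)) * (2 * w - 2)) ≤
      2 * (M * (M - 1) * L) + (2 * w - (min M w : ℕ)) * (M * (L - 1)) := by
  have hm : (0 : ℝ) < 2 * w - (min M w : ℕ) := two_mul_sub_min_pos M hw
  calc (#C : ℝ) * ((2 * w - (min M w : ℕ)) * (2 * w - 2))
      = ∑ _S ∈ C, (2 * (w : ℝ) - (min M w : ℕ)) * (2 * w - 2) := by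
        rw [sum_const, nsmul_eq_mul]
    _ ≤ ∑ S ∈ C, (2 * ∑ p ∈ univ.offDiag, (#(Darr S p.1 p.2) : ℝ) +
          (2 * w - (min M w : ℕ)) * ∑ i, (#(Darr S i i) : ℝ)) := by
        refine sum_le_sum fun S hS ↦ ?_
        obtain rfl := hC.1 S hS
        exact mul_le_weighted_sum_card_darr hmin (card_pos.1 hw)
    _ ≤ 2 * (M * (M - 1) * L) + (2 * w - (min M w : ℕ)) * (M * (L - 1)) := by
        rw [sum_add_distrib, ← mul_sum, ← mul_sum]
        gcongr
        · exact hC.sum_sum_offDiag_card_darr_le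
        · exact hC.sum_sum_card_darr_self_le

end IsMCCAC

theorem stmt_0_general (M L w : ℕ) (hw : 2 ≤ w)
    (hprime : ∀ p : ℕ, p.Prime → p ∣ L → 2 * w - 1 ≤ p)
    (C : Finset (Finset (Fin M × ZMod L))) (hC : IsMCCAC M L w C) :
    (C.card : ℝ) ≤
      (M : ℝ) * ((M : ℝ) - 1) * (L : ℝ) / ((2 * (w : ℝ) - (min M w : ℕ)) * ((w : ℝ) - 1))
      + (M : ℝ) * ((L : ℝ) - 1) / (2 * (w : ℝ) - 2) := by
  have : NeZero L := ⟨by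
    rintro rfl
    have := hprime 2 Nat.prime_two (dvd_zero 2)
    omega⟩
  have hmin : ((2 * w - 1 : ℕ) : ℕ∞) ≤ AddMonoid.minOrder (ZMod L) :=
    le_minOrder_of_forall_prime_dvd_natCard (by rwa [Nat.card_zmod])
  have hw' : (0 : ℝ) < w - 1 := sub_pos.2 (Nat.one_lt_cast.2 hw)
  have hm : (0 : ℝ) < 2 * w - (min M w : ℕ) := two_mul_sub_min_pos M (by omega)
  have hcount := hC.card_mul_le (by omega) hmin
  rw [show 2 * (w : ℝ) - 2 = 2 * (w - 1) by ring] at hcount ⊢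
  calc (#C : ℝ)
      ≤ (2 * (M * (M - 1) * L) + (2 * w - (min M w : ℕ)) * (M * (L - 1))) /
          ((2 * w - (min M w : ℕ)) * (2 * (w - 1))) := (le_div_iff₀ (by positivity)).2 hcount
    _ = _ := by field_simp

theorem stmt_0 (M L w : ℕ) (hM : 0 < M) (hL : 0 < L) (hw : 2 ≤ w) (hMw : M < w)
    (hprime : ∀ p : ℕ, p.Prime → p ∣ L → 2 * w - 1 ≤ p)
    (C : Finset (Finset (Fin M × ZMod L))) (hC : IsMCCAC M L w C) :
    (C.card : ℝ) ≤
      (M : ℝ) * ((M : ℝ) - 1) * (L : ℝ) / ((2 * (w : ℝ) - (M : ℝ)) * ((w : ℝ) - 1))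
      + (M : ℝ) * ((L : ℝ) - 1) / (2 * (w : ℝ) - 2) := by
  simpa only [min_eq_left hMw.le] using stmt_0_general M L w hw hprime C hC
end

section
/- Let w ≥ 2 be an integer and let p_1 < p_2 < ... < p_n be primes with p_1 ≥ w. Suppose that for each i = 1, ..., n the Legendre symbol conditions hold: (-1/p_i) = -1, and (j/p_i)·((j-w+1)/p_i) = -1 for every j = 1, 2, ..., w-2. Then for any positive integers r_1, ..., r_n there exists an equi-difference CAC of length (w-1)·p_1^{r_1}···p_n^{r_n} and weight w having (p_1^{r_1}···p_n^{r_n} - 1)/2 codewords. -/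
/-- The set of nonzero differences of a subset `S ⊆ Z_L`. -/
def dstar {L : ℕ} (S : Finset (ZMod L)) : Finset (ZMod L) :=
  ((S ×ˢ S).image fun p => p.1 - p.2).erase 0

/-- A conflict-avoiding code of length `L` and weight `w`. -/
def IsCAC (L w : ℕ) (C : Finset (Finset (ZMod L))) : Prop :=
  (∀ S ∈ C, S.card = w) ∧
  ∀ S ∈ C, ∀ S' ∈ C, S ≠ S' → Disjoint (dstar S) (dstar S')

/-- A codeword is equi-difference if it is of the form `{0, g, 2g, …, (w-1)g}`. -/
def IsEquiDiff {L : ℕ} (w : ℕ) (S : Finset (ZMod L)) : Prop :=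
  ∃ g : ZMod L, S = (Finset.range w).image fun j : ℕ => (j : ZMod L) * g

/-!
Write `m = w - 1` and `N = ∏ pᵢ ^ rᵢ`. Since `m` is prime to `N`, we have
`ZMod (m * N) ≃ ZMod m × ZMod N`, and we use the generators `(1, x)` with `x` in a set `X`
containing exactly one of `±x` for each `x ≠ 0`. A common difference of two codewords has the form
`s • (1, x) = t • (1, y)` with `|s|, |t| ≤ m`, and `s ≡ t` mod `m` forces
`t ∈ {s, s ± m, s ± 2m}`. As `N` is prime to `1, …, m`, the code is conflict-avoiding as soon as
no `i • x + k • y` with `x, y ∈ X`, `i, k > 0` and `i + k = m` vanishes. In `ZMod p` the nonzero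
squares are such a set by the Legendre symbol conditions. Such sets can be glued along short exact
sequences, in the manner of a lexicographic order, and every finite abelian group is an iterated
extension of groups `ZMod p`.
-/

/-- A subset of an abelian group containing exactly one of `±a` for each `a ≠ 0`, on which no
combination `i • x + k • y` with `i, k > 0` and `i + k = m` vanishes; the group is moreover required
to have no `j`-torsion for `1 ≤ j ≤ m`. The second components of the generators `(1, x)` of an
equi-difference code of weight `m + 1` are taken from such a set. -/
structure IsConflictFreeHalf {A : Type*} [AddCommGroup A] (m : ℕ) (X : Set A) : Prop where
  eq_zero_of_nsmul_eq_zero : ∀ j, 0 < j → j ≤ m → ∀ a : A, j • a = 0 → a = 0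
  mem_or_neg_mem : ∀ a, a ≠ 0 → a ∈ X ∨ -a ∈ X
  add_ne_zero : ∀ x ∈ X, ∀ y ∈ X, x + y ≠ 0
  nsmul_add_nsmul_ne_zero :
    ∀ i k, 0 < i → 0 < k → i + k = m → ∀ x ∈ X, ∀ y ∈ X, i • x + k • y ≠ 0

namespace IsConflictFreeHalf

section Basic

variable {A : Type*} [AddCommGroup A] {m : ℕ} {X : Set A}

theorem zero_notMem (hX : IsConflictFreeHalf m X) : (0 : A) ∉ X :=
  fun h => hX.add_ne_zero 0 h 0 h (add_zero 0)

theorem ne_zero_of_mem (hX : IsConflictFreeHalf m X) {x : A} (hx : x ∈ X) : x ≠ 0 :=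
  ne_of_mem_of_not_mem hx hX.zero_notMem

theorem two_mul_ncard_add_one [Finite A] (hX : IsConflictFreeHalf m X) :
    2 * X.ncard + 1 = Nat.card A := by
  have hunion : X ∪ -X = {0}ᶜ := by
    ext a
    refine ⟨?_, hX.mem_or_neg_mem a⟩
    rintro (ha | ha)
    · exact hX.ne_zero_of_mem ha
    · exact neg_ne_zero.mp (hX.ne_zero_of_mem ha)
  have hdisj : Disjoint X (-X) :=
    Set.disjoint_left.mpr fun a ha ha' => hX.add_ne_zero a ha (-a) ha' (add_neg_cancel a)
  calc 2 * X.ncard + 1 = (X ∪ -X).ncard + ({0} : Set A).ncard := by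
        rw [Set.ncard_union_eq hdisj, Set.ncard_neg, Set.ncard_singleton, two_mul]
    _ = Nat.card A := by rw [hunion, add_comm, Set.ncard_add_ncard_compl]

theorem eq_zero_of_zsmul_eq_zero (hX : IsConflictFreeHalf m X) {s : ℤ} (hs : s ≠ 0)
    (hsm : |s| ≤ m) {a : A} (h : s • a = 0) : a = 0 :=
  hX.eq_zero_of_nsmul_eq_zero s.natAbs (Int.natAbs_pos.mpr hs) (by zify; exact hsm) a
    (natAbs_nsmul_eq_zero.mpr h)

theorem eq_of_pos_zsmul_eq_zsmul (hX : IsConflictFreeHalf m X) {x y : A} (hx : x ∈ X)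
    (hy : y ∈ X) {s t : ℤ} (hs : 0 < s) (hsm : s ≤ m) (ht : t ≠ 0) (htm : |t| ≤ m)
    (hst : (m : ℤ) ∣ s - t) (h : s • x = t • y) : x = y := by
  obtain ⟨c, hc⟩ := hst
  rw [abs_le] at htm
  have hc_nonneg : 0 ≤ c := by nlinarith
  have hc_le : c ≤ 2 := by nlinarith
  lift s to ℕ using hs.le
  rw [natCast_zsmul] at h
  have torsion := hX.eq_zero_of_nsmul_eq_zero s (by omega) (by omega)
  interval_cases c
  · obtain rfl : t = s := by omega
    rw [natCast_zsmul] at h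
    exact sub_eq_zero.mp (torsion _ (by rw [nsmul_sub, h, sub_self]))
  · obtain rfl : t = -((m - s : ℕ) : ℤ) := by omega
    rw [neg_zsmul, natCast_zsmul, eq_neg_iff_add_eq_zero] at h
    exact absurd h
      (hX.nsmul_add_nsmul_ne_zero s (m - s) (by omega) (by omega) (by omega) x hx y hy)
  · obtain rfl : t = -(s : ℤ) := by omega
    rw [neg_zsmul, natCast_zsmul, eq_neg_iff_add_eq_zero, ← nsmul_add] at h
    exact absurd (torsion _ h) (hX.add_ne_zero x hx y hy)

theorem eq_of_zsmul_eq_zsmul (hX : IsConflictFreeHalf m X) {x y : A} (hx : x ∈ X)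
    (hy : y ∈ X) {s t : ℤ} (hs : s ≠ 0) (hsm : |s| ≤ m) (ht : t ≠ 0) (htm : |t| ≤ m)
    (hst : (m : ℤ) ∣ s - t) (h : s • x = t • y) : x = y := by
  rcases hs.lt_or_gt with hneg | hpos
  · refine hX.eq_of_pos_zsmul_eq_zsmul hx hy (neg_pos.mpr hneg) ((neg_le_abs s).trans hsm)
      (neg_ne_zero.mpr ht) (by rwa [abs_neg]) ?_ (by rw [neg_zsmul, neg_zsmul, h])
    rwa [neg_sub_neg, dvd_sub_comm]
  · exact hX.eq_of_pos_zsmul_eq_zsmul hx hy hpos ((le_abs_self s).trans hsm) ht htm hst h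

end Basic

section Extension

variable {K A B : Type*} [AddCommGroup K] [AddCommGroup A] [AddCommGroup B]
  {ι : K →+ A} {π : A →+ B} {m : ℕ} {Z : Set K} {Y : Set B}

theorem nsmul_add_nsmul_ne_zero_of_exact (hι : Function.Injective ι)
    (hexact : Function.Exact ι π) {i k : ℕ} (hi : ∀ b : B, i • b = 0 → b = 0)
    (hk : ∀ b : B, k • b = 0 → b = 0) (hZ : ∀ x ∈ Z, ∀ y ∈ Z, i • x + k • y ≠ 0)
    (hY : ∀ x ∈ Y, ∀ y ∈ Y, i • x + k • y ≠ 0) :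
    ∀ x ∈ π ⁻¹' Y ∪ ι '' Z, ∀ y ∈ π ⁻¹' Y ∪ ι '' Z, i • x + k • y ≠ 0 := by
  have h0 : (0 : B) ∉ Y := fun h => hY 0 h 0 h (by simp)
  have hπι : ∀ z, π (ι z) = 0 := hexact.apply_apply_eq_zero
  rintro x (hx | ⟨x, hx, rfl⟩) y (hy | ⟨y, hy, rfl⟩) h
  · exact hY _ hx _ hy (by simpa using congrArg π h)
  · exact ne_of_mem_of_not_mem (a := π x) hx h0 (hi _ (by simpa [hπι] using congrArg π h))
  · exact ne_of_mem_of_not_mem (a := π y) hy h0 (hk _ (by simpa [hπι] using congrArg π h))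
  · exact hZ _ hx _ hy (hι (by simpa using h))

theorem of_exact (hι : Function.Injective ι) (hexact : Function.Exact ι π)
    (hZ : IsConflictFreeHalf m Z) (hY : IsConflictFreeHalf m Y) :
    IsConflictFreeHalf m (π ⁻¹' Y ∪ ι '' Z) where
  eq_zero_of_nsmul_eq_zero j hj hjm a ha := by
    have hπa : π a = 0 := hY.eq_zero_of_nsmul_eq_zero j hj hjm _ (by rw [← map_nsmul, ha, map_zero])
    obtain ⟨z, rfl⟩ := (hexact a).mp hπa
    rw [hZ.eq_zero_of_nsmul_eq_zero j hj hjm z (hι (by rw [map_nsmul, ha, map_zero])), map_zero]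
  mem_or_neg_mem a ha := by
    by_cases hπa : π a = 0
    · obtain ⟨z, rfl⟩ := (hexact a).mp hπa
      have hz : z ≠ 0 := by rintro rfl; exact ha (map_zero ι)
      exact (hZ.mem_or_neg_mem z hz).imp (fun h => .inr ⟨z, h, rfl⟩)
        (fun h => .inr ⟨-z, h, map_neg ι z⟩)
    · refine (hY.mem_or_neg_mem (π a) hπa).imp .inl fun h => .inl ?_
      rwa [Set.mem_preimage, map_neg]
  add_ne_zero := by
    simpa only [one_nsmul] using nsmul_add_nsmul_ne_zero_of_exact (i := 1) (k := 1) hι hexact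
      (by simp) (by simp) (by simpa using hZ.add_ne_zero) (by simpa using hY.add_ne_zero)
  nsmul_add_nsmul_ne_zero i k hi hk hik :=
    nsmul_add_nsmul_ne_zero_of_exact hι hexact
      (hY.eq_zero_of_nsmul_eq_zero i hi (by omega)) (hY.eq_zero_of_nsmul_eq_zero k hk (by omega))
      (hZ.nsmul_add_nsmul_ne_zero i k hi hk hik) (hY.nsmul_add_nsmul_ne_zero i k hi hk hik)

end Extension

end IsConflictFreeHalf

theorem isConflictFreeHalf_empty {A : Type*} [AddCommGroup A] [Subsingleton A] (m : ℕ) :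
    IsConflictFreeHalf m (∅ : Set A) where
  eq_zero_of_nsmul_eq_zero _ _ _ a _ := Subsingleton.elim a 0
  mem_or_neg_mem a ha := absurd (Subsingleton.elim a 0) ha
  add_ne_zero _ hx := hx.elim
  nsmul_add_nsmul_ne_zero _ _ _ _ _ _ hx := hx.elim

theorem exists_injective_zmod_addMonoidHom {A : Type*} [AddCommGroup A] [Finite A] {p : ℕ}
    (hp : p.Prime) (hpA : p ∣ Nat.card A) : ∃ ι : ZMod p →+ A, Function.Injective ι := by
  have : Fact p.Prime := ⟨hp⟩
  obtain ⟨g, hg⟩ := exists_prime_addOrderOf_dvd_card' p hpA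
  refine ⟨ZMod.lift p ⟨zmultiplesHom A g, ?_⟩, (ZMod.lift_injective p).mpr fun n hn => ?_⟩
  · simp [← hg, addOrderOf_nsmul_eq_zero]
  · rwa [ZMod.intCast_zmod_eq_zero_iff_dvd, ← hg, addOrderOf_dvd_iff_zsmul_eq_zero]

theorem exists_isConflictFreeHalf_of_forall_prime {A : Type*} [AddCommGroup A] [Finite A] {m : ℕ}
    (h : ∀ p : ℕ, p.Prime → p ∣ Nat.card A → ∃ X : Set (ZMod p), IsConflictFreeHalf m X) :
    ∃ X : Set A, IsConflictFreeHalf m X := by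
  induction hcard : Nat.card A using Nat.strong_induction_on generalizing A with
  | h c ih =>
    subst hcard
    rcases subsingleton_or_nontrivial A with _ | _
    · exact ⟨∅, isConflictFreeHalf_empty m⟩
    obtain ⟨p, hp, hpA⟩ := Nat.exists_prime_and_dvd (Finite.one_lt_card (α := A)).ne'
    obtain ⟨Z, hZ⟩ := h p hp hpA
    obtain ⟨ι, hι⟩ := exists_injective_zmod_addMonoidHom hp hpA
    have hcard : Nat.card A = Nat.card (A ⧸ ι.range) * p := by
      rw [ι.range.card_eq_card_quotient_mul_card_addSubgroup,
        ← Nat.card_congr (AddMonoidHom.ofInjective hι).toEquiv, Nat.card_zmod]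
    have hlt : Nat.card (A ⧸ ι.range) < Nat.card A :=
      hcard ▸ lt_mul_of_one_lt_right Nat.card_pos hp.one_lt
    obtain ⟨Y, hY⟩ := ih _ hlt
      (fun q hq hqQ => h q hq (hcard ▸ hqQ.mul_right p)) rfl
    have hexact : Function.Exact ι (QuotientAddGroup.mk' ι.range) := fun a => by
      rw [QuotientAddGroup.mk'_apply, QuotientAddGroup.eq_zero_iff, AddMonoidHom.mem_range,
        Set.mem_range]
    exact ⟨_, hZ.of_exact hι hexact hY⟩

section QuadraticResidues

variable {F : Type*} [Field F] [Fintype F] [DecidableEq F] {m : ℕ}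

theorem natCast_ne_zero_of_quadraticChar_mul_eq_neg_one
    (hχ : ∀ i k : ℕ, 0 < i → 0 < k → i + k = m → quadraticChar F i * quadraticChar F (-k) = -1)
    {j : ℕ} (hj : 0 < j) (hjm : j ≤ m) : (j : F) ≠ 0 := by
  intro hj0
  obtain hlt | rfl := hjm.lt_or_eq
  · have := hχ j (m - j) hj (by omega) (by omega)
    simp [hj0] at this
  obtain rfl | hj1 : j = 1 ∨ 1 < j := by omega
  · simp at hj0
  have hneg : -((j - 1 : ℕ) : F) = 1 := by rw [Nat.cast_pred hj, hj0]; ring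
  have := hχ 1 (j - 1) one_pos (by omega) (by omega)
  simp [hneg] at this

theorem isConflictFreeHalf_setOf_quadraticChar_eq_one (hneg : quadraticChar F (-1) = -1)
    (hχ : ∀ i k : ℕ, 0 < i → 0 < k → i + k = m → quadraticChar F i * quadraticChar F (-k) = -1) :
    IsConflictFreeHalf m {x : F | quadraticChar F x = 1} where
  eq_zero_of_nsmul_eq_zero j hj hjm a ha := by
    rw [nsmul_eq_mul] at ha
    exact (mul_eq_zero.mp ha).resolve_left
      (natCast_ne_zero_of_quadraticChar_mul_eq_neg_one hχ hj hjm)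
  mem_or_neg_mem a ha := by
    refine (quadraticChar_dichotomy ha).imp id fun h => ?_
    rw [Set.mem_ofPred_eq, ← neg_one_mul, map_mul, hneg, h, neg_one_mul, neg_neg]
  add_ne_zero x hx y hy h := by
    rw [Set.mem_ofPred_eq] at hx hy
    rw [eq_neg_of_add_eq_zero_left h, ← neg_one_mul, map_mul, hneg, hy] at hx
    norm_num at hx
  nsmul_add_nsmul_ne_zero i k hi hk hik x hx y hy h := by
    rw [Set.mem_ofPred_eq] at hx hy
    have hχ_eq : quadraticChar F i = quadraticChar F (-k) := by
      rw [nsmul_eq_mul, nsmul_eq_mul, add_eq_zero_iff_eq_neg, ← neg_mul] at h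
      have := congrArg (quadraticChar F) h
      rwa [map_mul, map_mul, hx, hy, mul_one, mul_one] at this
    have hprod := hχ i k hi hk hik
    rw [hχ_eq] at hprod
    nlinarith [mul_self_nonneg (quadraticChar F (-k))]

theorem isConflictFreeHalf_of_legendreSym {p w : ℕ} [Fact p.Prime]
    (hneg : legendreSym p (-1) = -1)
    (hprod : ∀ j : ℕ, 1 ≤ j → j ≤ w - 2 → legendreSym p j * legendreSym p ((j : ℤ) - w + 1) = -1) :
    IsConflictFreeHalf (w - 1) {x : ZMod p | quadraticChar (ZMod p) x = 1} := by
  refine isConflictFreeHalf_setOf_quadraticChar_eq_one (by simpa [legendreSym] using hneg) ?_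
  intro j k hj hk hjk
  have hk_eq : (j : ℤ) - w + 1 = -k := by omega
  have hjk_prod := hprod j hj (by omega)
  rw [hk_eq] at hjk_prod
  simpa [legendreSym] using hjk_prod

end QuadraticResidues

section EquiDifference

variable {L w : ℕ}

/-- The codeword `{0, g, 2g, …, (w-1)g}`, in the form used by `IsEquiDiff`. -/
def equiDiffWord (w : ℕ) (g : ZMod L) : Finset (ZMod L) :=
  (Finset.range w).image fun j : ℕ => (j : ZMod L) * g

theorem isEquiDiff_equiDiffWord (g : ZMod L) : IsEquiDiff w (equiDiffWord w g) :=
  ⟨g, rfl⟩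

theorem dstar_nonempty {S : Finset (ZMod L)} (hS : 1 < S.card) : (dstar S).Nonempty := by
  obtain ⟨a, ha, b, hb, hab⟩ := Finset.one_lt_card.mp hS
  exact ⟨a - b, Finset.mem_erase.mpr ⟨sub_ne_zero.mpr hab,
    Finset.mem_image.mpr ⟨(a, b), Finset.mk_mem_product ha hb, rfl⟩⟩⟩

theorem exists_eq_zsmul_of_mem_dstar_equiDiffWord {g d : ZMod L}
    (hd : d ∈ dstar (equiDiffWord w g)) : ∃ s : ℤ, s ≠ 0 ∧ |s| < w ∧ d = s • g := by
  simp only [dstar, equiDiffWord, Finset.mem_erase, Finset.mem_image, Finset.mem_product,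
    Finset.mem_range, Prod.exists] at hd
  obtain ⟨hd0, _, _, ⟨⟨i, hi, rfl⟩, j, hj, rfl⟩, rfl⟩ := hd
  refine ⟨i - j, ?_, by rw [abs_lt]; omega, by simp [sub_mul]⟩
  rintro hij
  obtain rfl : i = j := by omega
  exact hd0 (sub_self _)

theorem card_equiDiffWord {g : ZMod L} (hg : ∀ s : ℤ, s ≠ 0 → |s| < w → s • g ≠ 0) :
    (equiDiffWord w g).card = w := by
  rw [equiDiffWord, Finset.card_image_of_injOn, Finset.card_range]
  intro i hi j hj hij
  simp only [Finset.coe_range, Set.mem_Iio] at hi hj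
  by_contra hne
  refine hg (i - j) (by omega) (by rw [abs_lt]; omega) ?_
  simpa [sub_mul, sub_eq_zero] using hij

variable {G : Finset (ZMod L)}

theorem isCAC_image_equiDiffWord (hG : ∀ g ∈ G, ∀ s : ℤ, s ≠ 0 → |s| < w → s • g ≠ 0)
    (hdisj : ∀ g ∈ G, ∀ h ∈ G, g ≠ h →
      Disjoint (dstar (equiDiffWord w g)) (dstar (equiDiffWord w h))) :
    IsCAC L w (G.image (equiDiffWord w)) := by
  refine ⟨Finset.forall_mem_image.mpr fun g hg => card_equiDiffWord (hG g hg),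
    Finset.forall_mem_image.mpr fun g hg => Finset.forall_mem_image.mpr fun h hh hne => ?_⟩
  exact hdisj g hg h hh fun hgh => hne (congrArg _ hgh)

theorem injOn_equiDiffWord (hw : 2 ≤ w)
    (hG : ∀ g ∈ G, ∀ s : ℤ, s ≠ 0 → |s| < w → s • g ≠ 0)
    (hdisj : ∀ g ∈ G, ∀ h ∈ G, g ≠ h →
      Disjoint (dstar (equiDiffWord w g)) (dstar (equiDiffWord w h))) :
    Set.InjOn (equiDiffWord w) (G : Set (ZMod L)) := by
  intro g hg h hh hgh
  by_contra hne
  have hempty := hdisj g hg h hh hne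
  rw [← hgh, disjoint_self] at hempty
  refine (dstar_nonempty (S := equiDiffWord w g) ?_).ne_empty hempty
  rwa [card_equiDiffWord (hG g hg)]

theorem exists_isCAC_of_forall_zsmul (hw : 2 ≤ w)
    (hG : ∀ g ∈ G, ∀ s : ℤ, s ≠ 0 → |s| < w → s • g ≠ 0)
    (hGG : ∀ g ∈ G, ∀ h ∈ G, ∀ s t : ℤ, s ≠ 0 → |s| < w → t ≠ 0 → |t| < w →
      s • g = t • h → g = h) :
    ∃ C, IsCAC L w C ∧ (∀ S ∈ C, IsEquiDiff w S) ∧ C.card = G.card := by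
  have hdisj : ∀ g ∈ G, ∀ h ∈ G, g ≠ h →
      Disjoint (dstar (equiDiffWord w g)) (dstar (equiDiffWord w h)) := by
    intro g hg h hh hne
    refine Finset.disjoint_left.mpr fun d hdg hdh => hne ?_
    obtain ⟨s, hs, hsw, rfl⟩ := exists_eq_zsmul_of_mem_dstar_equiDiffWord hdg
    obtain ⟨t, ht, htw, hst⟩ := exists_eq_zsmul_of_mem_dstar_equiDiffWord hdh
    exact hGG g hg h hh s t hs hsw ht htw hst
  exact ⟨G.image (equiDiffWord w), isCAC_image_equiDiffWord hG hdisj,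
    Finset.forall_mem_image.mpr fun g _ => isEquiDiff_equiDiffWord g,
    Finset.card_image_of_injOn (injOn_equiDiffWord hw hG hdisj)⟩

end EquiDifference

namespace IsConflictFreeHalf

variable {m N : ℕ} [NeZero N] {X : Set (ZMod N)}

theorem coprime (hX : IsConflictFreeHalf m X) (hm : 0 < m) : m.Coprime N := by
  rw [← ZMod.isUnit_iff_coprime, isUnit_iff_mem_nonZeroDivisors_of_finite,
    mem_nonZeroDivisors_iff_right]
  intro a ha
  exact hX.eq_zero_of_nsmul_eq_zero m hm le_rfl a (by rw [nsmul_eq_mul, mul_comm, ha])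

theorem exists_isCAC (hX : IsConflictFreeHalf m X) (hm : 0 < m) :
    ∃ C : Finset (Finset (ZMod (m * N))),
      IsCAC (m * N) (m + 1) C ∧ (∀ S ∈ C, IsEquiDiff (m + 1) S) ∧ C.card = (N - 1) / 2 := by
  classical
  let e := ZMod.chineseRemainder (hX.coprime hm)
  let gen : ZMod N → ZMod (m * N) := fun x => e.symm (1, x)
  have hgen : Function.Injective gen := fun x y h => (Prod.ext_iff.mp (e.symm.injective h)).2
  have e_zsmul_gen (s : ℤ) (x : ZMod N) : e (s • gen x) = ((s : ZMod m), s • x) := by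
    rw [map_zsmul, e.apply_symm_apply, Prod.smul_mk, zsmul_one]
  have hcard : (X.toFinset.image gen).card = (N - 1) / 2 := by
    have := hX.two_mul_ncard_add_one
    rw [Nat.card_zmod] at this
    rw [Finset.card_image_of_injective _ hgen, ← Set.ncard_eq_toFinset_card']
    omega
  rw [← hcard]
  refine exists_isCAC_of_forall_zsmul (by omega) ?_ ?_ <;>
    simp only [Finset.forall_mem_image, Set.mem_toFinset, Nat.cast_add_one, Int.lt_add_one_iff]
  · intro x hx s hs hsm h
    have hsx : s • x = 0 := congrArg Prod.snd ((e_zsmul_gen s x).symm.trans (by rw [h, map_zero]))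
    exact hX.ne_zero_of_mem hx (hX.eq_zero_of_zsmul_eq_zero hs hsm hsx)
  · intro x hx y hy s t hs hsm ht htm h
    have he := congrArg e h
    rw [e_zsmul_gen, e_zsmul_gen, Prod.mk.injEq] at he
    have hst : (m : ℤ) ∣ s - t := by
      rw [← ZMod.intCast_eq_intCast_iff_dvd_sub, he.1]
    rw [hX.eq_of_zsmul_eq_zsmul hx hy hs hsm ht htm hst he.2]

end IsConflictFreeHalf

theorem stmt_2_general {m N : ℕ} [NeZero N] (hm : 0 < m)
    (h : ∀ p : ℕ, p.Prime → p ∣ N → ∃ X : Set (ZMod p), IsConflictFreeHalf m X) :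
    ∃ C : Finset (Finset (ZMod (m * N))),
      IsCAC (m * N) (m + 1) C ∧ (∀ S ∈ C, IsEquiDiff (m + 1) S) ∧ C.card = (N - 1) / 2 := by
  obtain ⟨X, hX⟩ := exists_isConflictFreeHalf_of_forall_prime (A := ZMod N) (m := m)
    (by rwa [Nat.card_zmod])
  exact hX.exists_isCAC hm

theorem stmt_2 (w n : ℕ) (hw : 2 ≤ w) (p : Fin n → ℕ) (hp : ∀ i, (p i).Prime)
    (hmono : StrictMono p) (hpw : ∀ i, w ≤ p i)
    (hQ1 : ∀ i, @legendreSym (p i) ⟨hp i⟩ (-1) = -1)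
    (hQ2 : ∀ i, ∀ j : ℕ, 1 ≤ j → j ≤ w - 2 →
      @legendreSym (p i) ⟨hp i⟩ (j : ℤ) * @legendreSym (p i) ⟨hp i⟩ ((j : ℤ) - w + 1) = -1)
    (r : Fin n → ℕ) (hr : ∀ i, 0 < r i) :
    ∃ C : Finset (Finset (ZMod ((w - 1) * ∏ i, p i ^ r i))),
      IsCAC ((w - 1) * ∏ i, p i ^ r i) w C ∧ (∀ S ∈ C, IsEquiDiff w S) ∧
      C.card = ((∏ i, p i ^ r i) - 1) / 2 := by
  obtain ⟨m, rfl⟩ : ∃ m, w = m + 1 := ⟨w - 1, by omega⟩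
  have : NeZero (∏ i, p i ^ r i) :=
    ⟨Finset.prod_ne_zero_iff.mpr fun i _ => pow_ne_zero _ (hp i).ne_zero⟩
  refine stmt_2_general (by omega) fun q hq hqN => ?_
  obtain ⟨i, -, hqi⟩ := (hq.prime.dvd_finsetProd_iff _).mp hqN
  obtain rfl := (Nat.prime_dvd_prime_iff_eq hq (hp i)).mp (hq.dvd_of_dvd_pow hqi)
  have : Fact (p i).Prime := ⟨hq⟩
  exact ⟨_, isConflictFreeHalf_of_legendreSym (w := m + 1) (hQ1 i) (hQ2 i)⟩
end

section
/- Let w ≥ 2 be an integer and let p_1 < p_2 < ... < p_n be primes with p_1 ≥ w. Suppose that for each i = 1, ..., n the Legendre symbol conditions hold: (-1/p_i) = -1, and (j/p_i)·((j-w+1)/p_i) = -1 for every j = 1, 2, ..., w-2. Suppose in addition that Σ_{i : p_i < 2w-1} (2w - 1 - p_i) ≤ w - 1. Then for any positive integers r_1, ..., r_n, the maximum number of codewords of a CAC of length (w-1)·p_1^{r_1}···p_n^{r_n} and weight w equals (p_1^{r_1}···p_n^{r_n} - 1)/2. -/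
/-!
Write `L = (w - 1) M`. *Upper bound.* A codeword `S` with at least `2w - 1` differences uses up
`2 (w - 1)` nonzero ones. If `|S - S| ≤ 2w - 2`, Hamidoune's isoperimetric method (an atom of `S`
containing `0` is a subgroup) gives a subgroup `H` with `|H + S| ≤ |H| + |S| - 2`. Either a coset of
`H` is more than half filled by `S`, so that `H ⊆ S - S`, or `S` lies in a single coset and one
descends to `H`. The order of `H` does not divide `w - 1`, so some prime `q ∣ M` divides it. Two
such codewords have subgroups meeting only in `0`, so of coprime orders in the cyclic group
`ZMod L`, and their primes differ. The total shortage of differences is thus at most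
`∑ (2w - 1 - q) ≤ w - 1`, too little to make room for one more codeword.

*Lower bound.* Take the progressions `{0, x, …, (w - 1) x}` with `x ≡ 1 (mod w - 1)` and
`x ≡ a (mod M)`, where `a` runs over one half of the nonzero residues modulo `M`: those for which
`a / M`, in lowest terms, has numerator a square modulo the least prime `q` of its denominator. A
common difference `k x = l y` forces `k ≡ l (mod w - 1)` and `(k/q) = (l/q)`, which the Legendre
symbol conditions allow only for `k = l`, and then `x = y`.
-/

section Isoperimetry

open Set Pointwise

variable {G : Type*} [AddCommGroup G] {A B S X : Set G}

/-- The growth `|A + S| - |A|` of a finite set `A` under addition of `S`, as an integer. -/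
noncomputable def sumExcess (S A : Set G) : ℤ := (A + S).ncard - A.ncard

/-- The fragments of `S` in the sense of Hamidoune's isoperimetric method: the sets of least growth
among the nonempty sets `A` for which `A + S` is not the whole group. -/
def IsSumFragment (S : Set G) : Set G → Prop :=
  MinimalFor (fun A ↦ A.Nonempty ∧ A + S ≠ univ) (sumExcess S)

/-- The atoms of `S` in the sense of Hamidoune's isoperimetric method: the fragments of least
cardinality. -/
def IsSumAtom (S : Set G) : Set G → Prop :=
  MinimalFor (IsSumFragment S) ncard

theorem sumExcess_vadd (g : G) (S A : Set G) : sumExcess S (g +ᵥ A) = sumExcess S A := by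
  simp only [sumExcess, vadd_add_assoc, ncard_vadd_set]

theorem vadd_add_ne_univ_iff (g : G) : (g +ᵥ A) + S ≠ univ ↔ A + S ≠ univ := by
  rw [vadd_add_assoc, ne_eq, ne_eq, vadd_set_eq_univ]

theorem IsSumFragment.vadd (g : G) (hA : IsSumFragment S A) : IsSumFragment S (g +ᵥ A) := by
  refine ⟨⟨hA.prop.1.vadd_set, (vadd_add_ne_univ_iff g).2 hA.prop.2⟩, fun X hX _ ↦ ?_⟩
  rw [sumExcess_vadd]
  exact hA.le hX

theorem IsSumAtom.vadd (g : G) (hA : IsSumAtom S A) : IsSumAtom S (g +ᵥ A) := by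
  refine ⟨hA.prop.vadd g, fun X hX _ ↦ ?_⟩
  rw [ncard_vadd_set]
  exact hA.le hX

theorem neg_compl_add_subset (A S : Set G) : -(A + S)ᶜ + S ⊆ (-A)ᶜ := by
  rintro _ ⟨d, hd, s, hs, rfl⟩ hA
  exact hd ⟨-(d + s), hA, s, hs, by simp⟩

variable [Finite G]

theorem exists_isSumAtom (hX : X.Nonempty) (hXS : X + S ≠ univ) : ∃ A, IsSumAtom S A := by
  obtain ⟨B, hB⟩ := (toFinite {A : Set G | A.Nonempty ∧ A + S ≠ univ}).exists_minimalFor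
    (sumExcess S) _ ⟨X, hX, hXS⟩
  exact (toFinite {A | IsSumFragment S A}).exists_minimalFor ncard _ ⟨B, hB⟩

theorem sumExcess_union_add_sumExcess_inter_le (S A B : Set G) :
    sumExcess S (A ∪ B) + sumExcess S (A ∩ B) ≤ sumExcess S A + sumExcess S B := by
  have hinter : (A ∩ B + S).ncard ≤ ((A + S) ∩ (B + S)).ncard := ncard_le_ncard inter_add_subset
  have hsum := ncard_union_add_ncard_inter (A + S) (B + S)
  have hset := ncard_union_add_ncard_inter A B
  rw [← union_add] at hsum
  simp only [sumExcess]
  lia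

theorem IsSumFragment.neg_compl_add (hA : IsSumFragment S A) : IsSumFragment S (-(A + S)ᶜ) := by
  obtain ⟨hAne, hAS⟩ := hA.prop
  have hsub := neg_compl_add_subset A S
  have hprop : (-(A + S)ᶜ).Nonempty ∧ -(A + S)ᶜ + S ≠ univ :=
    ⟨(nonempty_compl.2 hAS).neg, fun h ↦
      hAne.neg.ne_empty (compl_univ_iff.1 (univ_subset_iff.1 (h ▸ hsub)))⟩
  refine ⟨hprop, fun X hX _ ↦ le_trans ?_ (hA.le hX)⟩
  have hcard := ncard_le_ncard hsub
  have hcompl := ncard_add_ncard_compl (A + S)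
  have hcompl' := ncard_add_ncard_compl (-A)
  rw [ncard_neg] at hcompl'
  simp only [sumExcess, ncard_neg]
  lia

theorem IsSumAtom.ncard_add_ncard_add_le (hA : IsSumAtom S A) :
    A.ncard + (A + S).ncard ≤ Nat.card G := by
  have hle := hA.le hA.prop.neg_compl_add
  rw [ncard_neg] at hle
  have := ncard_add_ncard_compl (A + S)
  lia

theorem IsSumAtom.eq_of_inter_nonempty (hA : IsSumAtom S A) (hB : IsSumAtom S B)
    (hAB : (A ∩ B).Nonempty) : A = B := by
  have hcard : A.ncard = B.ncard := le_antisymm (hA.le hB.prop) (hB.le hA.prop)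
  have hexcess : sumExcess S A = sumExcess S B :=
    le_antisymm (hA.prop.le hB.prop.prop) (hB.prop.le hA.prop.prop)
  have hinter_ne : A ∩ B + S ≠ univ := fun h ↦
    hA.prop.prop.2 (univ_subset_iff.1 (h ▸ add_subset_add_right inter_subset_left))
  have hsubmod := sumExcess_union_add_sumExcess_inter_le S A B
  suffices hfrag : IsSumFragment S (A ∩ B) by
    have hinter : A ∩ B = A := eq_of_subset_of_ncard_le inter_subset_left (hA.le hfrag)
    exact eq_of_subset_of_ncard_le (inter_eq_left.1 hinter) hcard.ge
  refine ⟨⟨hAB, hinter_ne⟩, fun X hX _ ↦ le_trans ?_ (hA.prop.le hX)⟩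
  by_contra! hlt
  have hunion_ne : A ∪ B + S ≠ univ := by
    intro hunion
    have hdual := hA.ncard_add_ncard_add_le
    have hset := ncard_union_add_ncard_inter A B
    have hpos := hAB.ncard_pos
    simp only [sumExcess, hunion, ncard_univ] at *
    lia
  have := hA.prop.le ⟨hA.prop.prop.1.mono subset_union_left, hunion_ne⟩
  lia

theorem exists_addSubgroup_isSumAtom (hX : X.Nonempty) (hXS : X + S ≠ univ) :
    ∃ H : AddSubgroup G, IsSumAtom S (H : Set G) := by
  obtain ⟨A, hA⟩ := exists_isSumAtom hX hXS
  obtain ⟨a, ha⟩ := hA.prop.prop.1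
  refine ⟨AddAction.stabilizer G A, ?_⟩
  convert hA.vadd (-a)
  ext x
  rw [SetLike.mem_coe, AddAction.mem_stabilizer_iff, mem_vadd_set_iff_neg_vadd_mem, neg_neg,
    vadd_eq_add, add_comm a]
  constructor
  · intro hx
    exact hx ▸ vadd_mem_vadd_set ha
  · intro hx
    exact (hA.vadd x).eq_of_inter_nonempty hA ⟨x + a, vadd_mem_vadd_set ha, hx⟩

theorem exists_addSubgroup_sumExcess_le (hX : X.Nonempty) (hXS : X + S ≠ univ) :
    ∃ H : AddSubgroup G, (H : Set G) + S ≠ univ ∧ sumExcess S (H : Set G) ≤ sumExcess S X := by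
  obtain ⟨H, hH⟩ := exists_addSubgroup_isSumAtom hX hXS
  exact ⟨H, hH.prop.prop.2, hH.prop.le ⟨hX, hXS⟩⟩

end Isoperimetry

section Period

open Set Pointwise

variable {G : Type*} [AddCommGroup G] {S : Set G} {H : AddSubgroup G}

theorem ncard_vadd_addSubgroup (s : G) (H : AddSubgroup G) :
    (s +ᵥ (H : Set G)).ncard = Nat.card H := by
  rw [ncard_vadd_set, ← Nat.card_coe_set_eq]
  rfl

theorem natCard_dvd_ncard_addSubgroup_add (H : AddSubgroup G) (S : Set G) :
    Nat.card H ∣ ((H : Set G) + S).ncard := by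
  rw [add_comm, ← Nat.card_coe_set_eq,
    AddSubgroup.card_add_eq_card_addSubgroup_add_card_quotient]
  exact dvd_mul_right _ _

theorem exists_vadd_image_subtype_eq {s : G} (h : S ⊆ s +ᵥ (H : Set G)) :
    ∃ T : Set H, s +ᵥ H.subtype '' T = S := by
  refine ⟨H.subtype ⁻¹' (-s +ᵥ S), ?_⟩
  rw [image_preimage_eq_of_subset, vadd_neg_vadd]
  rwa [AddSubgroup.coe_subtype, Subtype.range_coe, ← subset_vadd_set_iff]

theorem vadd_image_sub_vadd_image {K : Type*} [AddCommGroup K] (f : K →+ G) (g : G) (T : Set K) :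
    (g +ᵥ f '' T) - (g +ᵥ f '' T) = f '' (T - T) := by
  rw [vadd_sub_vadd_comm, sub_self, zero_vadd, image_sub]

theorem ncard_map_add_vadd_image {K : Type*} [AddCommGroup K] {f : K →+ G}
    (hf : Function.Injective f) (g : G) (H : AddSubgroup K) (T : Set K) :
    ((H.map f : Set G) + (g +ᵥ f '' T)).ncard = ((H : Set K) + T).ncard := by
  rw [add_vadd_comm, ncard_vadd_set, AddSubgroup.coe_map, ← image_add,
    ncard_image_of_injective _ hf]

variable [Finite G]

theorem addSubgroup_subset_sub_of_card_lt {s : G}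
    (h : Nat.card H < 2 * (S ∩ (s +ᵥ (H : Set G))).ncard) : (H : Set G) ⊆ S - S := by
  intro x hx
  set T := S ∩ (s +ᵥ (H : Set G)) with hT
  have hxT : x +ᵥ T ⊆ s +ᵥ (H : Set G) := by
    rintro _ ⟨_, ⟨-, y, hy, rfl⟩, rfl⟩
    exact ⟨x + y, H.add_mem hx hy, add_left_comm s x y⟩
  have hmeet : ¬ Disjoint T (x +ᵥ T) := by
    intro hdisj
    have hle := ncard_le_ncard (union_subset (s := T) (hT ▸ inter_subset_right) hxT)
    rw [ncard_union_eq hdisj, ncard_vadd_set, ncard_vadd_addSubgroup] at hle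
    lia
  obtain ⟨_, hy, t, ht, rfl⟩ := not_disjoint_iff.1 hmeet
  exact ⟨x + t, hy.1, t, ht.1, add_sub_cancel_right x t⟩

theorem subset_vadd_addSubgroup_of_ncard_add_lt
    (hsum : ((H : Set G) + S).ncard < Nat.card H + S.ncard)
    (hhalf : ∀ s : G, 2 * (S ∩ (s +ᵥ (H : Set G))).ncard ≤ Nat.card H) {s : G} (hs : s ∈ S) :
    S ⊆ s +ᵥ (H : Set G) := by
  by_contra hsub
  obtain ⟨t, ht, hts⟩ := not_subset.1 hsub
  have hcoset {u : G} (hu : u ∈ S) : u +ᵥ (H : Set G) ⊆ H + S := by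
    rintro _ ⟨h, hh, rfl⟩
    exact ⟨h, hh, u, hu, add_comm h u⟩
  have hdisj : Disjoint (s +ᵥ (H : Set G)) (t +ᵥ (H : Set G)) := by
    rw [disjoint_left]
    rintro _ ⟨h, hh, rfl⟩ ⟨k, hk, hkh⟩
    refine hts ⟨h - k, H.sub_mem hh hk, ?_⟩
    simp only [vadd_eq_add] at hkh ⊢
    rw [add_sub, ← hkh, add_sub_cancel_right]
  have hsdiff : (s +ᵥ (H : Set G)) \ S ∪ (t +ᵥ (H : Set G)) \ S ⊆ (H + S) \ S :=
    union_subset (sdiff_subset_sdiff_left (hcoset hs)) (sdiff_subset_sdiff_left (hcoset ht))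
  have hle := ncard_le_ncard hsdiff
  rw [ncard_union_eq (hdisj.mono sdiff_subset sdiff_subset)] at hle
  have hsplit (u : G) := ncard_inter_add_ncard_sdiff_eq_ncard (u +ᵥ (H : Set G)) S
  simp only [ncard_vadd_addSubgroup, inter_comm _ S] at hsplit
  have hS : S ⊆ H + S := fun x hx ↦ ⟨0, H.zero_mem, x, hx, zero_add x⟩
  have hsplitS := ncard_sdiff_add_ncard_of_subset hS
  have := hhalf s
  have := hhalf t
  have := hsplit s
  have := hsplit t
  lia

theorem not_card_dvd_ncard_sub_one (hS : S.Nonempty)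
    (h : ((H : Set G) + S).ncard + 2 ≤ Nat.card H + S.ncard) : ¬ Nat.card H ∣ S.ncard - 1 := by
  rintro ⟨t, ht⟩
  obtain ⟨u, hu⟩ := natCard_dvd_ncard_addSubgroup_add H S
  have hSH : S.ncard ≤ ((H : Set G) + S).ncard :=
    ncard_le_ncard fun x hx ↦ ⟨0, H.zero_mem, x, hx, zero_add x⟩
  have hpos := hS.ncard_pos
  have htu : t < u := lt_of_mul_lt_mul_left (a := Nat.card H) (by lia) (Nat.zero_le _)
  have := Nat.mul_le_mul_left (Nat.card H) (Nat.succ_le_of_lt htu)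
  rw [Nat.mul_succ] at this
  lia

theorem exists_addSubgroup_subset_sub {G : Type*} [AddCommGroup G] [Finite G] {S : Set G}
    (hS : S.Nonempty) (hsub : (S - S).ncard + 2 ≤ 2 * S.ncard) :
    ∃ H : AddSubgroup G, (H : Set G) ⊆ S - S ∧
      ((H : Set G) + S).ncard + 2 ≤ Nat.card H + S.ncard := by
  induction hN : Nat.card G using Nat.strong_induction_on generalizing G with
  | _ N ih
  subst hN
  by_cases huniv : S - S = univ
  · refine ⟨⊤, huniv.ge.trans' (subset_univ _), ?_⟩
    have hpos := (hS.sub hS).ncard_pos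
    rw [AddSubgroup.coe_top, Set.univ_add hS, ncard_univ, AddSubgroup.card_top]
    lia
  have hneg : -S + S = S - S := by rw [sub_eq_add_neg, add_comm]
  obtain ⟨H, hHS, hexcess⟩ := exists_addSubgroup_sumExcess_le hS.neg (hneg ▸ huniv)
  have hHcard : (H : Set G).ncard = Nat.card H := Nat.card_coe_set_eq _
  have hH : ((H : Set G) + S).ncard + 2 ≤ Nat.card H + S.ncard := by
    simp only [sumExcess, hneg, ncard_neg] at hexcess
    lia
  by_cases hbig : ∃ s : G, Nat.card H < 2 * (S ∩ (s +ᵥ (H : Set G))).ncard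
  · obtain ⟨s, hs⟩ := hbig
    exact ⟨H, addSubgroup_subset_sub_of_card_lt hs, hH⟩
  push Not at hbig
  have hHlt : Nat.card H < Nat.card G := by
    rw [← hHcard]
    exact ncard_lt_card fun h ↦ hHS (h ▸ Set.univ_add hS)
  obtain ⟨s, hs⟩ := hS
  obtain ⟨T, rfl⟩ :=
    exists_vadd_image_subtype_eq (subset_vadd_addSubgroup_of_ncard_add_lt (by lia) hbig hs)
  have hinj := H.subtype_injective
  have hT : T.Nonempty := image_nonempty.1 (vadd_set_nonempty.1 ⟨s, hs⟩)
  rw [vadd_image_sub_vadd_image, ncard_image_of_injective _ hinj, ncard_vadd_set,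
    ncard_image_of_injective _ hinj] at hsub
  obtain ⟨K, hKsub, hKcard⟩ := ih _ hHlt hT hsub rfl
  refine ⟨K.map H.subtype, ?_, ?_⟩
  · rw [vadd_image_sub_vadd_image, AddSubgroup.coe_map]
    exact image_mono hKsub
  · rwa [ncard_map_add_vadd_image hinj, ncard_vadd_set, ncard_image_of_injective _ hinj,
      AddSubgroup.card_map_of_injective hinj]

end Period

section UpperBound

open Finset Pointwise

theorem coprime_card_of_disjoint {G : Type*} [AddCommGroup G] [Finite G] [IsAddCyclic G]
    {H K : AddSubgroup G} (h : Disjoint H K) : (Nat.card H).Coprime (Nat.card K) := by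
  have hinj : Function.Injective (H.subtype.coprod K.subtype) :=
    AddSubgroup.add_injective_of_disjoint h
  have : IsAddCyclic (H × K) := isAddCyclic_of_injective _ hinj
  exact coprime_card_of_isAddCyclic_prod H K

variable {L w : ℕ} {S : Finset (ZMod L)} {C : Finset (Finset (ZMod L))}

theorem dstar_eq_erase_sub (S : Finset (ZMod L)) : dstar S = (S - S).erase 0 := rfl

theorem card_dstar_add_one (hS : S.Nonempty) : #(dstar S) + 1 = #(S - S) :=
  card_erase_add_one hS.zero_mem_sub

theorem exists_addSubgroup_subset_sub_not_card_dvd [NeZero L] (hS : S.Nonempty)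
    (hsub : #(S - S) + 2 ≤ 2 * #S) :
    ∃ H : AddSubgroup (ZMod L), (H : Set (ZMod L)) ⊆ ↑(S - S) ∧ ¬ Nat.card H ∣ #S - 1 := by
  obtain ⟨H, hHsub, hHcard⟩ := exists_addSubgroup_subset_sub (S := (S : Set (ZMod L)))
    (by simpa using hS) (by rwa [← coe_sub, Set.ncard_coe_finset, Set.ncard_coe_finset])
  refine ⟨H, by rwa [coe_sub], ?_⟩
  rw [← Set.ncard_coe_finset S]
  exact not_card_dvd_ncard_sub_one (by simpa using hS) hHcard

theorem exists_prime_dvd_card_addSubgroup {M : ℕ} [NeZero M] {S : Finset (ZMod ((w - 1) * M))}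
    (hw : 2 ≤ w) (hS : #S = w) (hsub : #(S - S) + 2 ≤ 2 * w) :
    ∃ q ∈ M.primeFactors, ∃ H : AddSubgroup (ZMod ((w - 1) * M)),
      (H : Set (ZMod ((w - 1) * M))) ⊆ ↑(S - S) ∧ q ∣ Nat.card H := by
  have : NeZero (w - 1) := ⟨by lia⟩
  have hSne : S.Nonempty := card_pos.1 (by lia)
  obtain ⟨H, hHsub, hHcard⟩ := exists_addSubgroup_subset_sub_not_card_dvd hSne (by lia)
  rw [hS] at hHcard
  have hdvd : Nat.card H ∣ (w - 1) * M := by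
    simpa only [Nat.card_zmod] using H.card_addSubgroup_dvd_card
  have hcop : ¬ (Nat.card H).Coprime M := fun h ↦ hHcard (h.dvd_of_dvd_mul_right hdvd)
  obtain ⟨q, hq, hqH, hqM⟩ := Nat.Prime.not_coprime_iff_dvd.1 hcop
  exact ⟨q, Nat.mem_primeFactors.2 ⟨hq, hqM, NeZero.ne M⟩, H, hHsub, hqH⟩

theorem IsCAC.disjoint_addSubgroup (hC : IsCAC L w C) {S S' : Finset (ZMod L)} (hS : S ∈ C)
    (hS' : S' ∈ C) (hne : S ≠ S') {H H' : AddSubgroup (ZMod L)}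
    (hH : (H : Set (ZMod L)) ⊆ ↑(S - S)) (hH' : (H' : Set (ZMod L)) ⊆ ↑(S' - S')) :
    Disjoint H H' := by
  rw [AddSubgroup.disjoint_def]
  intro x hx hx'
  by_contra hx0
  exact disjoint_left.1 (hC.2 S hS S' hS' hne) (mem_erase.2 ⟨hx0, hH hx⟩)
    (mem_erase.2 ⟨hx0, hH' hx'⟩)

theorem IsCAC.sum_card_dstar_lt [NeZero L] (hC : IsCAC L w C) : ∑ S ∈ C, #(dstar S) < L := by
  rw [← card_biUnion hC.2]
  have hzero : (0 : ZMod L) ∉ C.biUnion dstar := by simp [dstar_eq_erase_sub]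
  exact (card_lt_univ_of_notMem hzero).trans_eq (ZMod.card L)

/-- The truncated subtractions restrict the left sum to codewords with fewer than `2w - 1`
differences and the right sum to primes below `2w - 1`. -/
theorem IsCAC.sum_deficiency_le {M : ℕ} [NeZero M]
    {C : Finset (Finset (ZMod ((w - 1) * M)))} (hw : 2 ≤ w) (hC : IsCAC ((w - 1) * M) w C) :
    ∑ S ∈ C, (2 * w - 1 - #(S - S)) ≤ ∑ q ∈ M.primeFactors, (2 * w - 1 - q) := by
  have : NeZero (w - 1) := ⟨by lia⟩
  have hprime (S : {S ∈ C | #(S - S) + 2 ≤ 2 * w}) :=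
    have hS := mem_filter.1 S.2
    exists_prime_dvd_card_addSubgroup hw (hC.1 S hS.1) hS.2
  choose q hq H hH hqH using hprime
  have hq_inj : Function.Injective q := by
    intro S S' hSS'
    by_contra hne
    have hdisj := hC.disjoint_addSubgroup (mem_filter.1 S.2).1 (mem_filter.1 S'.2).1
      (Subtype.coe_ne_coe.2 hne) (hH S) (hH S')
    exact Nat.not_coprime_of_dvd_of_dvd (Nat.prime_of_mem_primeFactors (hq S)).one_lt (hqH S)
      (hSS' ▸ hqH S') (coprime_card_of_disjoint hdisj)
  have hq_le (S) : q S ≤ #(S.1 - S.1) := calc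
    q S ≤ Nat.card (H S) := Nat.le_of_dvd Nat.card_pos (hqH S)
    _ = (H S : Set (ZMod ((w - 1) * M))).ncard := Nat.card_coe_set_eq _
    _ ≤ #(S.1 - S.1) := Set.ncard_coe_finset (S.1 - S.1) ▸ Set.ncard_le_ncard (hH S)
  calc ∑ S ∈ C, (2 * w - 1 - #(S - S))
      = ∑ S ∈ C with #(S - S) + 2 ≤ 2 * w, (2 * w - 1 - #(S - S)) :=
        (sum_filter_of_ne fun S _ hS ↦ by lia).symm
    _ = ∑ S : {S ∈ C | #(S - S) + 2 ≤ 2 * w}, (2 * w - 1 - #(S.1 - S.1)) :=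
        (sum_coe_sort _ fun S ↦ 2 * w - 1 - #(S - S)).symm
    _ ≤ ∑ S : {S ∈ C | #(S - S) + 2 ≤ 2 * w}, (2 * w - 1 - q S) :=
        sum_le_sum fun S _ ↦ Nat.sub_le_sub_left (hq_le S) _
    _ = ∑ q ∈ univ.map ⟨q, hq_inj⟩, (2 * w - 1 - q) := 
        (sum_map univ ⟨q, hq_inj⟩ fun q ↦ 2 * w - 1 - q).symm
    _ ≤ ∑ q ∈ M.primeFactors, (2 * w - 1 - q) :=
        sum_le_sum_of_subset (map_subset_iff_subset_preimage.2 fun S _ ↦ mem_preimage.2 (hq S))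

theorem IsCAC.card_le {M : ℕ} {C : Finset (Finset (ZMod ((w - 1) * M)))} (hw : 2 ≤ w)
    (hM : Odd M) (hsum : ∑ q ∈ M.primeFactors, (2 * w - 1 - q) ≤ w - 1)
    (hC : IsCAC ((w - 1) * M) w C) : #C ≤ (M - 1) / 2 := by
  have : NeZero M := ⟨hM.pos.ne'⟩
  have : NeZero (w - 1) := ⟨by lia⟩
  have hdef := (hC.sum_deficiency_le hw).trans hsum
  have hdstar := hC.sum_card_dstar_lt
  have hweight : #C * (2 * (w - 1)) ≤ ∑ S ∈ C, (#(dstar S) + (2 * w - 1 - #(S - S))) := by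
    rw [← smul_eq_mul]
    refine card_nsmul_le_sum _ _ _ fun S hS ↦ ?_
    have hSne : S.Nonempty := card_pos.1 (by rw [hC.1 S hS]; lia)
    have hcard := card_dstar_add_one hSne
    lia
  rw [sum_add_distrib] at hweight
  have hlt : (w - 1) * (2 * #C) < (w - 1) * (M + 1) := by
    rw [mul_add]
    lia
  have := lt_of_mul_lt_mul_left hlt (Nat.zero_le _)
  obtain ⟨m, rfl⟩ := hM
  lia

end UpperBound

section Progression

open Finset

variable {L w : ℕ} {x y : ZMod L}

/-- The codeword `{0, x, …, (w - 1) x}`: an arithmetic progression with common difference `x`. -/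
def progression (w : ℕ) (x : ZMod L) : Finset (ZMod L) :=
  (range w).image fun j : ℕ ↦ (j : ZMod L) * x

theorem exists_intCast_mul_eq_of_mem_dstar_progression (hy : y ∈ dstar (progression w x)) :
    ∃ k : ℤ, k ≠ 0 ∧ k.natAbs < w ∧ (k : ZMod L) * x = y := by
  rw [dstar_eq_erase_sub, mem_erase, mem_sub] at hy
  obtain ⟨hy0, _, hi, _, hj, rfl⟩ := hy
  obtain ⟨i, hiw, rfl⟩ := mem_image.1 hi
  obtain ⟨j, hjw, rfl⟩ := mem_image.1 hj
  rw [mem_range] at hiw hjw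
  refine ⟨i - j, ?_, by lia, by push_cast; ring⟩
  intro hij
  obtain rfl : i = j := by lia
  exact hy0 (sub_self _)

theorem mem_dstar_progression_self (hw : 2 ≤ w) (hx : x ≠ 0) : x ∈ dstar (progression w x) := by
  have hmem {j : ℕ} (hj : j < w) : (j : ZMod L) * x ∈ progression w x :=
    mem_image_of_mem _ (mem_range.2 hj)
  refine mem_erase.2 ⟨hx, mem_sub.2 ⟨_, hmem (j := 1) (by lia), _, hmem (j := 0) (by lia), ?_⟩⟩
  simp

theorem card_progression (hx : ∀ k : ℤ, k ≠ 0 → k.natAbs < w → (k : ZMod L) * x ≠ 0) :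
    #(progression w x) = w := by
  rw [progression, card_image_of_injOn, card_range]
  intro i hi j hj hij
  simp only [coe_range, Set.mem_Iio] at hi hj hij
  by_contra hne
  refine hx (i - j) (by lia) (by lia) ?_
  rw [Int.cast_sub, Int.cast_natCast, Int.cast_natCast, sub_mul, hij, sub_self]

theorem isCAC_image_progression {X : Finset (ZMod L)}
    (hne : ∀ x ∈ X, ∀ k : ℤ, k ≠ 0 → k.natAbs < w → (k : ZMod L) * x ≠ 0)
    (heq : ∀ x ∈ X, ∀ y ∈ X, ∀ k l : ℤ, k ≠ 0 → k.natAbs < w → l ≠ 0 → l.natAbs < w →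
      (k : ZMod L) * x = l * y → x = y) :
    IsCAC L w (X.image (progression w)) := by
  refine ⟨forall_mem_image.2 fun x hx ↦ card_progression (hne x hx),
    forall_mem_image.2 fun x hx ↦ forall_mem_image.2 fun y hy hxy ↦ disjoint_left.2 ?_⟩
  intro z hzx hzy
  obtain ⟨k, hk0, hkw, rfl⟩ := exists_intCast_mul_eq_of_mem_dstar_progression hzx
  obtain ⟨l, hl0, hlw, hlk⟩ := exists_intCast_mul_eq_of_mem_dstar_progression hzy
  exact hxy (congrArg _ (heq x hx y hy k l hk0 hkw hl0 hlw hlk.symm))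

theorem injOn_progression (hw : 2 ≤ w) {X : Finset (ZMod L)} (hne : ∀ x ∈ X, x ≠ 0)
    (heq : ∀ x ∈ X, ∀ y ∈ X, ∀ k : ℤ, k ≠ 0 → k.natAbs < w → (k : ZMod L) * x = y → x = y) :
    Set.InjOn (progression w) (X : Set (ZMod L)) := by
  intro x hx y hy hxy
  have hmem := mem_dstar_progression_self hw (hne y hy)
  rw [← hxy] at hmem
  obtain ⟨k, hk0, hkw, hk⟩ := exists_intCast_mul_eq_of_mem_dstar_progression hmem
  exact heq x hx y hy k hk0 hkw hk

end Progression

section QuadraticSign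

/-- The quadratic character of the numerator of `x` modulo the least prime factor of its
denominator. If `-1` is a nonresidue modulo every prime factor of `M`, its values at `a / M` split
the nonzero residues `a` modulo `M` into two halves interchanged by negation. -/
def quadraticSign (x : ℚ) : ℤ := jacobiSym x.num x.den.minFac

theorem intCast_mul_add_intCast_eq_div (x : ℚ) (k t : ℤ) :
    k * x + t = ((k * x.num + x.den * t : ℤ) : ℚ) / (x.den : ℤ) := by
  have hden : (x.den : ℚ) ≠ 0 := Nat.cast_ne_zero.2 x.den_ne_zero
  nth_rw 1 [← Rat.num_div_den x]
  push_cast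
  field_simp

variable {x : ℚ} {k : ℤ}

theorem coprime_natAbs_mul_num_add (hk : IsCoprime k x.den) (t : ℤ) :
    (k * x.num + x.den * t).natAbs.Coprime (x.den : ℤ).natAbs :=
  Int.isCoprime_iff_gcd_eq_one.1
    ((hk.mul_left (Int.isCoprime_iff_gcd_eq_one.2 x.reduced)).add_mul_left_left t)

theorem den_intCast_mul_add_intCast (hk : IsCoprime k x.den) (t : ℤ) :
    (k * x + t).den = x.den := by
  have hden := Rat.den_div_eq_of_coprime (by exact_mod_cast x.den_pos)
    (coprime_natAbs_mul_num_add hk t)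
  rw [intCast_mul_add_intCast_eq_div]
  exact_mod_cast hden

theorem quadraticSign_intCast_mul_add_intCast (hk : IsCoprime k x.den) (t : ℤ) :
    quadraticSign (k * x + t) = jacobiSym k x.den.minFac * quadraticSign x := by
  have hnum := Rat.num_div_eq_of_coprime (by exact_mod_cast x.den_pos)
    (coprime_natAbs_mul_num_add hk t)
  rw [← intCast_mul_add_intCast_eq_div] at hnum
  rw [quadraticSign, quadraticSign, den_intCast_mul_add_intCast hk, hnum, ← jacobiSym.mul_left]
  have hdvd : (x.den.minFac : ℤ) ∣ x.den * t :=
    (Int.natCast_dvd_natCast.2 x.den.minFac_dvd).mul_right t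
  exact jacobiSym.mod_left' (Int.ModEq.symm (Int.modEq_iff_dvd.2 (by simpa using hdvd)))

theorem quadraticSign_eq_one_or_neg_one (x : ℚ) : quadraticSign x = 1 ∨ quadraticSign x = -1 :=
  jacobiSym.eq_one_or_neg_one
    (Nat.Coprime.coprime_dvd_right x.den.minFac_dvd x.reduced)

end QuadraticSign

section PositiveResidues

open Finset

variable {M : ℕ} {k : ℤ}

/-- The representative in `[0, 1)` of the residue `a` under the identification of `ZMod M` with
the `M`-torsion of `ℚ / ℤ`. -/
def residueRat (a : ZMod M) : ℚ := a.val / M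

theorem den_residueRat_dvd (a : ZMod M) : (residueRat a).den ∣ M := by
  have hden := Rat.den_dvd a.val M
  rw [Rat.divInt_eq_div, Int.cast_natCast, Int.cast_natCast] at hden
  exact Int.natCast_dvd_natCast.1 hden

theorem isCoprime_den_residueRat (hk : IsCoprime k M) (a : ZMod M) :
    IsCoprime k (residueRat a).den :=
  hk.of_isCoprime_of_dvd_right (Int.natCast_dvd_natCast.2 (den_residueRat_dvd a))

variable [NeZero M]

theorem den_residueRat_ne_one {a : ZMod M} (ha : a ≠ 0) : (residueRat a).den ≠ 1 := by
  intro hden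
  have hM : (0 : ℚ) < M := Nat.cast_pos.2 (NeZero.pos M)
  have hpos : 0 < residueRat a :=
    div_pos (Nat.cast_pos.2 (Nat.pos_of_ne_zero (a.val_ne_zero.2 ha))) hM
  have hlt : residueRat a < 1 := (div_lt_one hM).2 (Nat.cast_lt.2 a.val_lt)
  rw [← (Rat.den_eq_one_iff _).1 hden] at hpos hlt
  norm_cast at hpos hlt
  lia

theorem minFac_den_residueRat_mem_primeFactors {a : ZMod M} (ha : a ≠ 0) :
    (residueRat a).den.minFac ∈ M.primeFactors :=
  Nat.mem_primeFactors.2 ⟨Nat.minFac_prime (den_residueRat_ne_one ha),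
    (Nat.minFac_dvd _).trans (den_residueRat_dvd a), NeZero.ne M⟩

theorem exists_residueRat_intCast_mul_eq (k : ℤ) (a : ZMod M) :
    ∃ t : ℤ, residueRat ((k : ZMod M) * a) = k * residueRat a + t := by
  have hmod : (M : ℤ) ∣ ((k : ZMod M) * a).val - k * a.val := by
    rw [← ZMod.intCast_zmod_eq_zero_iff_dvd]
    simp
  obtain ⟨t, ht⟩ := hmod
  have hM : (M : ℚ) ≠ 0 := Nat.cast_ne_zero.2 (NeZero.ne M)
  refine ⟨t, ?_⟩
  rw [residueRat, residueRat, ← mul_div_assoc, div_add' _ _ _ hM, div_left_inj' hM]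
  have ht' : (((k : ZMod M) * a).val : ℤ) = k * a.val + t * M := by linarith
  exact_mod_cast ht'

theorem den_residueRat_intCast_mul (hk : IsCoprime k M) (a : ZMod M) :
    (residueRat ((k : ZMod M) * a)).den = (residueRat a).den := by
  obtain ⟨t, ht⟩ := exists_residueRat_intCast_mul_eq k a
  rw [ht, den_intCast_mul_add_intCast (isCoprime_den_residueRat hk a)]

theorem quadraticSign_residueRat_intCast_mul (hk : IsCoprime k M) (a : ZMod M) :
    quadraticSign (residueRat ((k : ZMod M) * a)) =
      jacobiSym k (residueRat a).den.minFac * quadraticSign (residueRat a) := by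
  obtain ⟨t, ht⟩ := exists_residueRat_intCast_mul_eq k a
  rw [ht, quadraticSign_intCast_mul_add_intCast (isCoprime_den_residueRat hk a)]

theorem quadraticSign_residueRat_neg {a : ZMod M} (ha : a ≠ 0)
    (hneg : ∀ q ∈ M.primeFactors, jacobiSym (-1) q = -1) :
    quadraticSign (residueRat (-a)) = -quadraticSign (residueRat a) := by
  have hmul := quadraticSign_residueRat_intCast_mul (M := M) isCoprime_one_left.neg_left a
  rw [hneg _ (minFac_den_residueRat_mem_primeFactors ha)] at hmul
  simpa using hmul

variable (M) in
/-- The nonzero residues of positive quadratic sign; they are the generators modulo `M` of the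
codewords of an optimal code. -/
def positiveResidues : Finset (ZMod M) :=
  {a | a ≠ 0 ∧ quadraticSign (residueRat a) = 1}

theorem mem_positiveResidues {a : ZMod M} :
    a ∈ positiveResidues M ↔ a ≠ 0 ∧ quadraticSign (residueRat a) = 1 := by
  simp [positiveResidues]

theorem two_mul_card_positiveResidues_add_one
    (hneg : ∀ q ∈ M.primeFactors, jacobiSym (-1) q = -1) :
    2 * #(positiveResidues M) + 1 = M := by
  have hcompl : (positiveResidues M).image Neg.neg = univ.erase 0 \ positiveResidues M := by
    ext a
    rw [image_neg_eq_neg, mem_neg', mem_sdiff, mem_erase, mem_positiveResidues,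
      mem_positiveResidues, neg_ne_zero]
    by_cases ha : a = 0
    · simp [ha]
    rw [quadraticSign_residueRat_neg ha hneg]
    have := quadraticSign_eq_one_or_neg_one (residueRat a)
    grind
  have hsub : positiveResidues M ⊆ univ.erase 0 := fun a ha ↦
    mem_erase.2 ⟨(mem_positiveResidues.1 ha).1, mem_univ a⟩
  have hcard := congrArg card hcompl
  have hle := card_le_card hsub
  rw [card_image_of_injective _ neg_injective, card_sdiff_of_subset hsub] at hcard
  have hM := card_erase_add_one (mem_univ (0 : ZMod M))
  rw [card_univ, ZMod.card] at hM
  lia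

end PositiveResidues

section Admissible

variable {w q : ℕ} {k l : ℤ}

/-- The conditions imposed on the primes `p_i`, in terms of Jacobi symbols. For a prime `q ≥ w` they
amount to saying that no two distinct nonzero multipliers `k, l ∈ (-w, w)` with
`k ≡ l (mod w - 1)` have the same quadratic character modulo `q`. -/
structure IsAdmissible (w q : ℕ) : Prop where
  le : w ≤ q
  neg_one : jacobiSym (-1) q = -1
  mul_eq_neg_one : ∀ j : ℕ, 1 ≤ j → j ≤ w - 2 →
    jacobiSym j q * jacobiSym (j - w + 1) q = -1

theorem isCoprime_of_natAbs_lt_primeFactors {M : ℕ} (hM : M ≠ 0) (hq : ∀ q ∈ M.primeFactors, w ≤ q)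
    (hk : k ≠ 0) (hkw : k.natAbs < w) : IsCoprime k M := by
  rw [Int.isCoprime_iff_gcd_eq_one]
  refine Nat.coprime_of_dvd fun q hqp hqk hqM ↦ ?_
  have hle := Nat.le_of_dvd (Int.natAbs_pos.2 hk) hqk
  have := hq q (Nat.mem_primeFactors.2 ⟨hqp, hqM, hM⟩)
  lia

theorem IsAdmissible.eq_of_jacobiSym_eq (hq : IsAdmissible w q) (hqp : q.Prime) (hk : k ≠ 0)
    (hkw : k.natAbs < w) (hl : l ≠ 0) (hlw : l.natAbs < w) (hkl : ((w : ℤ) - 1) ∣ k - l)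
    (hJ : jacobiSym k q = jacobiSym l q) : k = l := by
  wlog hle : l ≤ k generalizing k l
  · exact (this hl hlw hk hkw (dvd_sub_comm.1 hkl) hJ.symm (by lia)).symm
  obtain ⟨t, ht⟩ := hkl
  have ht_nonneg : 0 ≤ t := by
    by_contra! h
    nlinarith [show (2 : ℤ) ≤ w by lia]
  have ht_le : t ≤ 2 := by
    by_contra! h
    nlinarith [show (2 : ℤ) ≤ w by lia, show k - l ≤ 2 * (w - 1) by lia]
  interval_cases t
  · lia
  · obtain ⟨j, rfl⟩ := Int.eq_ofNat_of_zero_le (show 0 ≤ k by lia)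
    have hpair := hq.mul_eq_neg_one j (by lia) (by lia)
    rw [show (j : ℤ) - w + 1 = l by lia, hJ] at hpair
    exact absurd hpair (by nlinarith [mul_self_nonneg (jacobiSym l q)])
  · obtain rfl : k = -1 * l := by lia
    rw [jacobiSym.mul_left, hq.neg_one] at hJ
    have hcop : IsCoprime l q := isCoprime_of_natAbs_lt_primeFactors hqp.ne_zero
      (by simpa [hqp.primeFactors] using hq.le) hl hlw
    exact absurd (show jacobiSym l q = 0 by lia)
      (jacobiSym.ne_zero (Int.isCoprime_iff_gcd_eq_one.1 hcop))

end Admissible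

section Optimality

open Finset

variable {w M : ℕ} [NeZero M]

theorem eq_of_intCast_mul_eq_of_mem_positiveResidues
    (hadm : ∀ q ∈ M.primeFactors, IsAdmissible w q) {a b : ZMod M} (ha : a ∈ positiveResidues M)
    (hb : b ∈ positiveResidues M) {k l : ℤ} (hk : k ≠ 0) (hkw : k.natAbs < w) (hl : l ≠ 0)
    (hlw : l.natAbs < w) (hkl : ((w : ℤ) - 1) ∣ k - l) (hab : (k : ZMod M) * a = l * b) :
    a = b := by
  have hle (q) (hq : q ∈ M.primeFactors) := (hadm q hq).le
  have hkM := isCoprime_of_natAbs_lt_primeFactors (NeZero.ne M) hle hk hkw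
  have hlM := isCoprime_of_natAbs_lt_primeFactors (NeZero.ne M) hle hl hlw
  rw [mem_positiveResidues] at ha hb
  have hden : (residueRat b).den = (residueRat a).den := by
    rw [← den_residueRat_intCast_mul hlM, ← hab, den_residueRat_intCast_mul hkM]
  have hsign := congrArg (fun c ↦ quadraticSign (residueRat c)) hab
  simp only [quadraticSign_residueRat_intCast_mul hkM, quadraticSign_residueRat_intCast_mul hlM,
    ha.2, hb.2, hden, mul_one] at hsign
  have hq := minFac_den_residueRat_mem_primeFactors ha.1
  obtain rfl : k = l := (hadm _ hq).eq_of_jacobiSym_eq (Nat.prime_of_mem_primeFactors hq)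
    hk hkw hl hlw hkl hsign
  exact ((ZMod.coe_int_isUnit_iff_isCoprime k M).2 hkM.symm).mul_left_cancel hab

theorem exists_isCAC_card_eq (hw : 2 ≤ w) (hadm : ∀ q ∈ M.primeFactors, IsAdmissible w q) :
    ∃ C, IsCAC ((w - 1) * M) w C ∧ #C = #(positiveResidues M) := by
  have hunit {k : ℤ} (hk : k ≠ 0) (hkw : k.natAbs < w) : IsCoprime k M :=
    isCoprime_of_natAbs_lt_primeFactors (NeZero.ne M) (fun q hq ↦ (hadm q hq).le) hk hkw
  have hcop : (w - 1).Coprime M := Nat.isCoprime_iff_coprime.1 (hunit (by lia) (by lia))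
  let e := ZMod.chineseRemainder hcop
  let X := (positiveResidues M).image fun a ↦ e.symm (1, a)
  have hmul (k : ℤ) (a : ZMod M) : k * e.symm (1, a) = e.symm (k, k * a) := by
    rw [← map_intCast e.symm, ← map_mul]
    congr 1
    ext <;> simp
  have hne : ∀ x ∈ X, ∀ k : ℤ, k ≠ 0 → k.natAbs < w → (k : ZMod ((w - 1) * M)) * x ≠ 0 := by
    refine forall_mem_image.2 fun a ha k hk hkw h ↦ (mem_positiveResidues.1 ha).1 ?_
    rw [hmul, EmbeddingLike.map_eq_zero_iff, Prod.mk_eq_zero] at h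
    have hkM := (ZMod.coe_int_isUnit_iff_isCoprime k M).2 (hunit hk hkw).symm
    exact (hkM.mul_right_eq_zero).1 h.2
  have heq : ∀ x ∈ X, ∀ y ∈ X, ∀ k l : ℤ, k ≠ 0 → k.natAbs < w → l ≠ 0 → l.natAbs < w →
      (k : ZMod ((w - 1) * M)) * x = l * y → x = y := by
    refine forall_mem_image.2 fun a ha ↦ forall_mem_image.2 fun b hb k l hk hkw hl hlw h ↦ ?_
    rw [hmul, hmul, e.symm.injective.eq_iff, Prod.mk_inj] at h
    have hkl : ((w : ℤ) - 1) ∣ k - l := by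
      rw [← Nat.cast_pred (by lia), ← ZMod.intCast_zmod_eq_zero_iff_dvd, Int.cast_sub, h.1,
        sub_self]
    rw [eq_of_intCast_mul_eq_of_mem_positiveResidues hadm ha hb hk hkw hl hlw hkl h.2]
  refine ⟨X.image (progression w), isCAC_image_progression hne heq, ?_⟩
  rw [card_image_of_injOn, card_image_of_injective]
  · exact fun a b hab ↦ (Prod.mk_inj.1 (e.symm.injective hab)).2
  · refine injOn_progression hw (fun x hx ↦ ?_) fun x hx y hy k hk hkw h ↦
      heq x hx y hy k 1 hk hkw one_ne_zero (by lia) (by simpa using h)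
    simpa using hne x hx 1 one_ne_zero (by lia)

theorem isGreatest_card_isCAC (hw : 2 ≤ w) (hadm : ∀ q ∈ M.primeFactors, IsAdmissible w q)
    (hsum : ∑ q ∈ M.primeFactors, (2 * w - 1 - q) ≤ w - 1) :
    IsGreatest {k | ∃ C, IsCAC ((w - 1) * M) w C ∧ #C = k} ((M - 1) / 2) := by
  have hcard := two_mul_card_positiveResidues_add_one fun q hq ↦ (hadm q hq).neg_one
  constructor
  · obtain ⟨C, hC, hCcard⟩ := exists_isCAC_card_eq hw hadm
    exact ⟨C, hC, by lia⟩
  · rintro _ ⟨C, hC, rfl⟩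
    exact hC.card_le hw ⟨_, hcard.symm⟩ hsum

end Optimality

theorem primeFactors_prod_pow_subset_image {ι : Type*} (s : Finset ι) {p : ι → ℕ}
    (hp : ∀ i ∈ s, (p i).Prime) (r : ι → ℕ) :
    (∏ i ∈ s, p i ^ r i).primeFactors ⊆ s.image p := by
  intro q hq
  have hqp := Nat.prime_of_mem_primeFactors hq
  obtain ⟨i, his, hi⟩ := hqp.prime.exists_mem_finset_dvd (Nat.dvd_of_mem_primeFactors hq)
  have hqi := (Nat.prime_dvd_prime_iff_eq hqp (hp i his)).1 (hqp.dvd_of_dvd_pow hi)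
  exact hqi ▸ Finset.mem_image_of_mem p his

theorem stmt_3 (w n : ℕ) (hw : 2 ≤ w) (p : Fin n → ℕ) (hp : ∀ i, (p i).Prime)
    (hmono : StrictMono p) (hpw : ∀ i, w ≤ p i)
    (hQ1 : ∀ i, @legendreSym (p i) ⟨hp i⟩ (-1) = -1)
    (hQ2 : ∀ i, ∀ j : ℕ, 1 ≤ j → j ≤ w - 2 →
      @legendreSym (p i) ⟨hp i⟩ (j : ℤ) * @legendreSym (p i) ⟨hp i⟩ ((j : ℤ) - w + 1) = -1)
    (hsum : ∑ i ∈ Finset.univ.filter (fun i => p i < 2 * w - 1), (2 * w - 1 - p i) ≤ w - 1)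
    (r : Fin n → ℕ) (hr : ∀ i, 0 < r i) :
    IsGreatest {k : ℕ | ∃ C : Finset (Finset (ZMod ((w - 1) * ∏ i, p i ^ r i))),
        IsCAC ((w - 1) * ∏ i, p i ^ r i) w C ∧ C.card = k}
      (((∏ i, p i ^ r i) - 1) / 2) := by
  have hadm (i) : IsAdmissible w (p i) := by
    have : Fact (p i).Prime := ⟨hp i⟩
    refine ⟨hpw i, ?_, fun j hj hjw ↦ ?_⟩
    · exact (jacobiSym.legendreSym.to_jacobiSym (p i) (-1)).symm.trans (hQ1 i)
    · simpa only [← jacobiSym.legendreSym.to_jacobiSym] using hQ2 i j hj hjw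
  have : NeZero (∏ i, p i ^ r i) :=
    ⟨Finset.prod_ne_zero_iff.2 fun i _ ↦ pow_ne_zero _ (hp i).ne_zero⟩
  have hprime := primeFactors_prod_pow_subset_image Finset.univ (fun i _ ↦ hp i) r
  refine isGreatest_card_isCAC hw (fun q hq ↦ ?_) ?_
  · obtain ⟨i, -, rfl⟩ := Finset.mem_image.1 (hprime hq)
    exact hadm i
  · calc ∑ q ∈ (∏ i, p i ^ r i).primeFactors, (2 * w - 1 - q)
        ≤ ∑ q ∈ Finset.univ.image p, (2 * w - 1 - q) := Finset.sum_le_sum_of_subset hprime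
      _ = ∑ i, (2 * w - 1 - p i) := Finset.sum_image hmono.injective.injOn
      _ = ∑ i with p i < 2 * w - 1, (2 * w - 1 - p i) :=
          (Finset.sum_filter_of_ne fun i _ hi ↦ by lia).symm
      _ ≤ w - 1 := hsum
end

section
/- Let w ≥ 2 be an integer and let p_1 < p_2 < ... < p_n be primes such that 2w - 2 divides p_i - 1 for each i. Suppose that for each i = 1, ..., n there exists an equi-difference CAC of length p_i and weight w with (p_i - 1)/(2w - 2) codewords, and that the Legendre symbol conditions hold: (-1/p_i) = -1, and (j/p_i)·((j-w+1)/p_i) = -1 for every j = 1, 2, ..., w-2. Then for any positive integers r_1, ..., r_n, the maximum number of codewords of an MC-CAC of length (w-1)·p_1^{r_1}···p_n^{r_n} and weight w in 2 channels equals p_1^{r_1}···p_n^{r_n} + (p_1^{r_1}···p_n^{r_n} - 1)/(w - 1). -/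
/-!
Write `w = k + 1` and `N = ∏ i, p i ^ r i`. Every prime factor of `N` exceeds `2 * k`, so the order
of a subgroup of `ZMod (k * N)` divides `k` or exceeds `2 * k`.

*Upper bound.* By a weak form of Kneser's theorem, a codeword meeting both channels has at least `k`
differences from channel `0` to channel `1`, so there are at most `N` of them. The same theorem
shows that, counting twice those killed by `k`, the differences within the channels number at least
`2 * k`, or `2 * k - 2` for a codeword meeting both channels. Summing over the code gives the bound.

*Lower bound.* Identify `ZMod (k * N)` with `ZMod k × ZMod N`. The generators of the given codes
split each `ZMod (p i)` by the multipliers `±1, …, ±k`, and splittings are inherited by extensions,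
so `ZMod N` is split by some `T`. The multiples of `(0, g)` with `g ∈ T` then give
`#T = (N - 1) / (2 * k)` codewords on each channel. The remaining `N` codewords, one for every
`g : ZMod N`, consist up to sign of the points `(j, (j + 1) • g)`, `j < k`, on one channel and of
`0` on the other. Two of these on the same channel conflict only through a relation
`m • g = (m - k) • g'` with `0 < m < k`. By the Legendre symbol conditions it never holds between
two squares or two nonsquares of `ZMod (p i)`, and the two-colouring this induces on `ZMod N` tells
which channel to use.
-/

open Finset
open scoped Pointwise

section PeriodicSubsets

variable {G : Type*} [AddCommGroup G] [DecidableEq G]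

lemma card_stabilizer_dvd_card (C : Finset G) : Nat.card (AddAction.stabilizer G C) ∣ #C := by
  have hC : (C : Set G) + AddAction.stabilizer G C = C := by
    rw [add_comm, ← AddAction.stabilizer_coe_finset, AddAction.stabilizer_add_self]
  have hcard := AddSubgroup.card_add_eq_card_addSubgroup_add_card_quotient
    (AddAction.stabilizer G C) (C : Set G)
  rw [hC, Nat.card_coe_set_eq, Set.ncard_coe_finset] at hcard
  exact Dvd.intro _ hcard.symm

lemma card_le_card_stabilizer_vadd {A B : Finset G} {b : G} (hA : A.Nonempty)
    (h : ∀ x ∈ A, ∀ y ∈ B, x - b + y ∈ A) :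
    #B ≤ Nat.card (AddAction.stabilizer G (b +ᵥ A)) := by
  have hsub : ((-b +ᵥ B : Finset G) : Set G) ⊆ AddAction.stabilizer G (b +ᵥ A) := by
    intro z hz
    obtain ⟨y, hy, rfl⟩ := mem_vadd_finset.1 (mem_coe.1 hz)
    refine AddAction.mem_stabilizer_finset_iff_vadd_finset_subset.2 fun x hx => ?_
    obtain ⟨_, hv, rfl⟩ := mem_vadd_finset.1 hx
    obtain ⟨u, hu, rfl⟩ := mem_vadd_finset.1 hv
    refine mem_vadd_finset.2 ⟨u - b + y, h u hu y hy, ?_⟩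
    simp only [vadd_eq_add]
    abel
  have hfin : (AddAction.stabilizer G (b +ᵥ A) : Set G).Finite := by
    rw [← AddAction.stabilizer_coe_finset]
    exact AddAction.stabilizer_finite (by simpa using hA) (finite_toSet _)
  calc #B = ((-b +ᵥ B : Finset G) : Set G).ncard := by
        rw [Set.ncard_coe_finset, card_vadd_finset]
    _ ≤ Nat.card (AddAction.stabilizer G (b +ᵥ A)) := Set.ncard_le_ncard hsub hfin

/-- A weak form of Kneser's theorem. While some `x - b + y` with `x ∈ A`, `y ∈ B` leaves `A`, the
Dyson transform along `x - b` shrinks `B` and keeps `#A + #B`; when none does, `b + A` is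
periodic under `B - b`. -/
lemma exists_subset_add_card_add_card_le (A B : Finset G) {a b : G} (ha : a ∈ A) (hb : b ∈ B) :
    ∃ C ⊆ A + B, a + b ∈ C ∧ #A + #B ≤ #C + Nat.card (AddAction.stabilizer G C) := by
  induction hn : #B using Nat.strong_induction_on generalizing A B with
  | _ n ih =>
  subst hn
  by_cases hclosed : ∀ x ∈ A, ∀ y ∈ B, x - b + y ∈ A
  · refine ⟨b +ᵥ A, ?_, ?_, ?_⟩
    · rw [add_comm A]
      exact vadd_finset_subset_add hb
    · exact mem_vadd_finset.2 ⟨a, ha, add_comm b a⟩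
    · rw [card_vadd_finset]
      exact Nat.add_le_add_left (card_le_card_stabilizer_vadd ⟨a, ha⟩ hclosed) _
  · push Not at hclosed
    obtain ⟨x, hx, y, hy, hxy⟩ := hclosed
    have hlt : #(B ∩ (-(x - b) +ᵥ A)) < #B := by
      refine card_lt_card ⟨inter_subset_left, fun hB => hxy ?_⟩
      obtain ⟨u, hu, rfl⟩ := mem_vadd_finset.1 (mem_inter.1 (hB hy)).2
      rwa [vadd_eq_add, add_neg_cancel_left]
    have hb' : b ∈ B ∩ (-(x - b) +ᵥ A) :=
      mem_inter.2 ⟨hb, mem_vadd_finset.2 ⟨x, hx, by simp⟩⟩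
    obtain ⟨C, hCsub, habC, hcard⟩ := ih _ hlt (A ∪ ((x - b) +ᵥ B)) _ (mem_union_left _ ha) hb' rfl
    exact ⟨C, hCsub.trans (addDysonETransform.subset (x - b) (A, B)), habC,
      (addDysonETransform.card (x - b) (A, B)).ge.trans hcard⟩

lemma le_card_sub_of_lt_card_add_card {k : ℕ} {A B : Finset G}
    (hG : ∀ H : AddSubgroup G, Nat.card H ∣ k ∨ k ≤ Nat.card H)
    (hA : A.Nonempty) (hB : B.Nonempty) (hk : k < #A + #B) : k ≤ #(A - B) := by
  obtain ⟨a, ha⟩ := hA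
  obtain ⟨b, hb⟩ := hB
  obtain ⟨C, hCsub, habC, hcard⟩ :=
    exists_subset_add_card_add_card_le A (-B) ha (neg_mem_neg hb)
  rw [card_neg] at hcard
  rw [← sub_eq_add_neg] at hCsub
  refine le_trans ?_ (card_le_card hCsub)
  have hdvd := card_stabilizer_dvd_card C
  rcases hG (AddAction.stabilizer G C) with hHk | hHk
  · -- `k` and `#C` are both multiples of the order of the stabilizer
    by_contra! hlt
    have := Nat.le_of_dvd (by lia) (Nat.dvd_sub hHk hdvd)
    lia
  · exact hHk.trans (Nat.le_of_dvd (card_pos.2 ⟨_, habC⟩) hdvd)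

lemma two_mul_card_le_card_sub_self_add {k : ℕ} {A : Finset G} (hA : A.Nonempty)
    (hG : ∀ H : AddSubgroup G, Nat.card H ∣ k ∨ 2 * #A ≤ Nat.card H + 1) :
    2 * #A ≤ #((A - A).erase 0) + #{x ∈ (A - A).erase 0 | k • x = 0} + 2 := by
  obtain ⟨a, ha⟩ := hA
  obtain ⟨C, hCsub, h0C, hcard⟩ :=
    exists_subset_add_card_add_card_le A (-A) ha (neg_mem_neg ha)
  rw [card_neg] at hcard
  rw [← sub_eq_add_neg] at hCsub
  rw [add_neg_cancel] at h0C
  have hCle : #C ≤ #((A - A).erase 0) + 1 := by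
    rw [card_erase_add_one (hCsub h0C)]
    exact card_le_card hCsub
  have hCpos : 0 < #C := card_pos.2 ⟨0, h0C⟩
  rcases hG (AddAction.stabilizer G C) with hHk | hHk
  · have hHsub : (AddAction.stabilizer G C : Set G) ⊆
        (insert 0 {x ∈ (A - A).erase 0 | k • x = 0} : Finset G) := by
      intro x hx
      have hxC : x ∈ C := by simpa using (AddAction.mem_stabilizer_finset.1 hx 0).2 h0C
      have hkx : k • x = 0 :=
        addOrderOf_dvd_iff_nsmul_eq_zero.1 ((AddSubgroup.addOrderOf_dvd_natCard _ hx).trans hHk)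
      by_cases hx0 : x = 0 <;> simp [hx0, hkx, hCsub hxC]
    have hHle : Nat.card (AddAction.stabilizer G C) ≤
        #{x ∈ (A - A).erase 0 | k • x = 0} + 1 :=
      (Set.ncard_le_ncard hHsub (finite_toSet _)).trans
        ((Set.ncard_coe_finset _).trans_le (card_insert_le _ _))
    lia
  · have := Nat.le_of_dvd hCpos (card_stabilizer_dvd_card C)
    lia

end PeriodicSubsets

section Differences

variable {M L : ℕ}

lemma mem_chan {S : Finset (Fin M × ZMod L)} {i : Fin M} {a : ZMod L} :
    a ∈ chan S i ↔ (i, a) ∈ S := by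
  simp [chan]

lemma sum_card_chan (S : Finset (Fin M × ZMod L)) : ∑ i, #(chan S i) = #S := by
  rw [card_eq_sum_card_fiberwise (f := Prod.fst) (t := univ) fun _ _ => mem_coe.2 (mem_univ _)]
  refine sum_congr rfl fun i _ => card_image_of_injOn ?_
  rintro ⟨_, _⟩ hx ⟨_, _⟩ hy rfl
  simp_all

lemma Darr_self (S : Finset (Fin M × ZMod L)) (i : Fin M) :
    Darr S i i = (chan S i - chan S i).erase 0 :=
  if_pos rfl

lemma Darr_of_ne (S : Finset (Fin M × ZMod L)) {i j : Fin M} (hij : i ≠ j) :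
    Darr S i j = chan S i - chan S j :=
  if_neg hij

lemma mem_Darr {S : Finset (Fin M × ZMod L)} {i j : Fin M} {t : ZMod L} :
    t ∈ Darr S i j ↔ (i = j → t ≠ 0) ∧ ∃ a b, (i, a) ∈ S ∧ (j, b) ∈ S ∧ a - b = t := by
  obtain rfl | hij := eq_or_ne i j
  · simp [Darr_self, mem_sub, mem_chan]
  · simp [Darr_of_ne S hij, mem_sub, mem_chan, hij]

lemma neg_mem_Darr {S : Finset (Fin M × ZMod L)} {i j : Fin M} {t : ZMod L}
    (ht : t ∈ Darr S i j) : -t ∈ Darr S j i := by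
  obtain ⟨ht0, a, b, ha, hb, rfl⟩ := mem_Darr.1 ht
  exact mem_Darr.2 ⟨fun hij => neg_ne_zero.2 (ht0 hij.symm), b, a, hb, ha, (neg_sub a b).symm⟩

end Differences

section UpperBound

lemma sum_card_le_card_of_pairwiseDisjoint {α β : Type*} {C : Finset α}
    {f : α → Finset β} {U : Finset β} (hf : (C : Set α).PairwiseDisjoint f)
    (hU : ∀ S ∈ C, f S ⊆ U) : ∑ S ∈ C, #(f S) ≤ #U := by
  classical
  rw [← card_biUnion hf]
  exact card_le_card (biUnion_subset.2 hU)

variable {k L : ℕ} {C : Finset (Finset (Fin 2 × ZMod L))}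

lemma IsMCCAC.pairwiseDisjoint_Darr {M w : ℕ} {C : Finset (Finset (Fin M × ZMod L))}
    (hC : IsMCCAC M L w C) (i j : Fin M) :
    (C : Set (Finset (Fin M × ZMod L))).PairwiseDisjoint fun S => Darr S i j :=
  fun S hS S' hS' hne => hC.2 S hS S' hS' hne i j

lemma IsMCCAC.mul_card_filter_nonempty_le [NeZero L] (hC : IsMCCAC 2 L (k + 1) C)
    (hL : ∀ H : AddSubgroup (ZMod L), Nat.card H ∣ k ∨ k ≤ Nat.card H) :
    k * #{S ∈ C | (chan S 0).Nonempty ∧ (chan S 1).Nonempty} ≤ L := by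
  have hcross : ∀ S ∈ C, (chan S 0).Nonempty ∧ (chan S 1).Nonempty → k ≤ #(Darr S 0 1) := by
    rintro S hS ⟨h₀, h₁⟩
    have hcard : #(chan S 0) + #(chan S 1) = k + 1 := by
      rw [← hC.1 S hS, ← sum_card_chan, Fin.sum_univ_two]
    rw [Darr_of_ne S zero_ne_one]
    exact le_card_sub_of_lt_card_add_card hL h₀ h₁ (by lia)
  calc k * #{S ∈ C | (chan S 0).Nonempty ∧ (chan S 1).Nonempty}
      = ∑ S ∈ C with (chan S 0).Nonempty ∧ (chan S 1).Nonempty, k := by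
        rw [sum_const, smul_eq_mul, mul_comm]
    _ ≤ ∑ S ∈ C with (chan S 0).Nonempty ∧ (chan S 1).Nonempty, #(Darr S 0 1) :=
        sum_le_sum fun S hS => hcross S (mem_filter.1 hS).1 (mem_filter.1 hS).2
    _ ≤ #(univ : Finset (ZMod L)) :=
        sum_card_le_card_of_pairwiseDisjoint
          ((hC.pairwiseDisjoint_Darr 0 1).subset (filter_subset _ _)) fun _ _ => subset_univ _
    _ = L := by rw [card_univ, ZMod.card]

lemma IsMCCAC.sum_card_Darr_self_add_le {M w : ℕ} {C : Finset (Finset (Fin M × ZMod L))}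
    [NeZero L] (hC : IsMCCAC M L w C) (hk : 0 < k) (i : Fin M) :
    ∑ S ∈ C, (#(Darr S i i) + #{x ∈ Darr S i i | k • x = 0}) + 2 ≤ L + k := by
  have hdiff : ∑ S ∈ C, #(Darr S i i) ≤ #(univ.erase (0 : ZMod L)) :=
    sum_card_le_card_of_pairwiseDisjoint (hC.pairwiseDisjoint_Darr i i) fun S _ => by
      rw [Darr_self]
      exact erase_subset_erase _ (subset_univ _)
  have htors : ∑ S ∈ C, #{x ∈ Darr S i i | k • x = 0} ≤
      #(({x | k • x = 0} : Finset (ZMod L)).erase 0) :=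
    sum_card_le_card_of_pairwiseDisjoint
      ((hC.pairwiseDisjoint_Darr i i).mono fun S => filter_subset _ _) fun S _ x => by
        simp only [Darr_self, mem_filter, mem_erase, mem_univ, true_and]
        tauto
  have htors_card : #({x | k • x = 0} : Finset (ZMod L)) ≤ k := IsAddCyclic.card_nsmul_eq_zero_le hk
  have hdiff_card := card_erase_add_one (mem_univ (0 : ZMod L))
  have htors_erase := card_erase_add_one (a := (0 : ZMod L)) (s := {x | k • x = 0}) (by simp)
  rw [card_univ, ZMod.card] at hdiff_card
  rw [sum_add_distrib]
  lia

lemma two_mul_le_sum_card_Darr_self_add {S : Finset (Fin 2 × ZMod L)} (hS : #S = k + 1)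
    (hL : ∀ H : AddSubgroup (ZMod L), Nat.card H ∣ k ∨ 2 * k < Nat.card H) :
    2 * k ≤ ∑ i, (#(Darr S i i) + #{x ∈ Darr S i i | k • x = 0}) +
      if (chan S 0).Nonempty ∧ (chan S 1).Nonempty then 2 else 0 := by
  have hcard : #(chan S 0) + #(chan S 1) = k + 1 := by
    rw [← hS, ← sum_card_chan, Fin.sum_univ_two]
  have hself : ∀ i, (chan S i).Nonempty →
      2 * #(chan S i) ≤ #(Darr S i i) + #{x ∈ Darr S i i | k • x = 0} + 2 := by
    intro i hi
    have hle : #(chan S i) ≤ k + 1 := by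
      rw [← hS, ← sum_card_chan]
      exact single_le_sum (f := fun i => #(chan S i)) (fun _ _ => Nat.zero_le _) (mem_univ i)
    rw [Darr_self]
    exact two_mul_card_le_card_sub_self_add hi fun H => (hL H).imp_right fun hH => by lia
  rw [Fin.sum_univ_two]
  rcases (chan S 0).eq_empty_or_nonempty with h₀ | h₀
  · rw [h₀, card_empty] at hcard
    have := hself 1 (card_pos.1 (by lia))
    lia
  rcases (chan S 1).eq_empty_or_nonempty with h₁ | h₁
  · rw [h₁, card_empty] at hcard
    have := hself 0 h₀
    lia
  rw [if_pos ⟨h₀, h₁⟩]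
  have := hself 0 h₀
  have := hself 1 h₁
  lia

/-- Words using both channels are charged to the `(0, 1)`-differences, the others to the
`(i, i)`-differences, where the at most `k` elements killed by `k` count twice. -/
lemma IsMCCAC.mul_card_le {N : ℕ} {C : Finset (Finset (Fin 2 × ZMod (k * N)))}
    (hC : IsMCCAC 2 (k * N) (k + 1) C) (hk : 0 < k) (hN : 0 < N)
    (hL : ∀ H : AddSubgroup (ZMod (k * N)), Nat.card H ∣ k ∨ 2 * k < Nat.card H) :
    k * #C + 2 ≤ k * N + N + k := by
  have : NeZero (k * N) := ⟨by positivity⟩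
  have hmixed : #{S ∈ C | (chan S 0).Nonempty ∧ (chan S 1).Nonempty} ≤ N :=
    Nat.le_of_mul_le_mul_left
      (hC.mul_card_filter_nonempty_le fun H => (hL H).imp_right fun hH => by lia) hk
  have hsum : ∑ S ∈ C, 2 * k ≤ ∑ i : Fin 2, ∑ S ∈ C,
      (#(Darr S i i) + #{x ∈ Darr S i i | k • x = 0}) +
      ∑ S ∈ C with (chan S 0).Nonempty ∧ (chan S 1).Nonempty, 2 := by
    rw [sum_comm, sum_filter, ← sum_add_distrib]
    exact sum_le_sum fun S hS => two_mul_le_sum_card_Darr_self_add (hC.1 S hS) hL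
  simp only [sum_const, smul_eq_mul, Fin.sum_univ_two] at hsum
  have := hC.sum_card_Darr_self_add_le hk 0
  have := hC.sum_card_Darr_self_add_le hk 1
  lia

lemma card_dvd_or_lt_card_of_addSubgroup_zmod {k N b : ℕ} [NeZero (k * N)]
    (hN : ∀ q, q.Prime → q ∣ N → b < q) (H : AddSubgroup (ZMod (k * N))) :
    Nat.card H ∣ k ∨ b < Nat.card H := by
  have hdvd : Nat.card H ∣ k * N := by
    simpa only [Nat.card_zmod] using AddSubgroup.card_addSubgroup_dvd_card H
  by_cases hcop : (Nat.card H).Coprime N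
  · exact .inl (hcop.dvd_of_dvd_mul_right hdvd)
  · obtain ⟨q, hq, hqH, hqN⟩ := Nat.Prime.not_coprime_iff_dvd.1 hcop
    exact .inr ((hN q hq hqN).trans_le (Nat.le_of_dvd Nat.card_pos hqH))

end UpperBound

section Splittings

lemma bijective_zsmul_of_isCoprime_card {G : Type*} [AddCommGroup G] {m : ℤ}
    (hm : IsCoprime m (Nat.card G : ℤ)) : Function.Bijective (m • · : G → G) := by
  obtain ⟨a, b, hab⟩ := hm
  have hsmul : ∀ x : G, (a * m) • x = x := fun x => by
    rw [eq_sub_of_add_eq hab, sub_smul, mul_smul, natCast_zsmul, card_nsmul_eq_zero', smul_zero,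
      one_smul, sub_zero]
  refine ⟨fun x y hxy => ?_, fun x => ⟨a • x, ?_⟩⟩
  · rw [← hsmul x, ← hsmul y, mul_zsmul, mul_zsmul]
    exact congrArg (a • ·) hxy
  · exact (mul_zsmul' x a m).symm.trans (hsmul x)

/-- A splitting of an abelian group in the sense of Stein, with the uniqueness requirement relaxed:
every nonzero element is `m • t` with `m ∈ M` and `t ∈ T`, but the dilates `m • T` and `m' • T` need
only be disjoint when `r m m'`. The choices of `M` and `r` that matter are `IsExactSplitting` and
`IsSignSplitting`. -/
structure IsSplitting {G : Type*} [AddCommGroup G] (M : Finset ℤ) (r : ℤ → ℤ → Prop)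
    (T : Set G) : Prop where
  zero_notMem : 0 ∉ T
  smul_ne_smul : ∀ {m m'}, r m m' → ∀ {s t}, s ∈ T → t ∈ T → m • s ≠ m' • t
  exists_smul_eq : ∀ {x : G}, x ≠ 0 → ∃ m ∈ M, ∃ t ∈ T, m • t = x

namespace IsSplitting

variable {G : Type*} [AddCommGroup G] {M : Finset ℤ} {r : ℤ → ℤ → Prop}

lemma empty [Subsingleton G] : IsSplitting M r (∅ : Set G) where
  zero_notMem := Set.notMem_empty 0
  smul_ne_smul _ _ _ hs := hs.elim
  exists_smul_eq hx := (hx (Subsingleton.elim _ _)).elim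

lemma image {G' : Type*} [AddCommGroup G'] {T : Set G} (hT : IsSplitting M r T) (e : G ≃+ G') :
    IsSplitting M r (e '' T) where
  zero_notMem := by
    rintro ⟨t, ht, ht0⟩
    exact hT.zero_notMem (e.map_eq_zero_iff.1 ht0 ▸ ht)
  smul_ne_smul := by
    rintro m m' hr _ _ ⟨s, hs, rfl⟩ ⟨t, ht, rfl⟩ h
    rw [← map_zsmul, ← map_zsmul] at h
    exact hT.smul_ne_smul hr hs ht (e.injective h)
  exists_smul_eq := by
    intro x hx
    obtain ⟨m, hm, t, ht, htx⟩ := hT.exists_smul_eq (e.symm.map_ne_zero_iff.2 hx)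
    exact ⟨m, hm, e t, ⟨t, ht, rfl⟩, by rw [← map_zsmul, htx, e.apply_symm_apply]⟩

lemma zsmul_notMem_of_mk_mem {H : AddSubgroup G} {Q : Set (G ⧸ H)} (hQ : IsSplitting M r Q)
    {m : ℤ} (hm : IsCoprime m (Nat.card (G ⧸ H) : ℤ)) {t : G} (ht : ↑t ∈ Q) : m • t ∉ H := by
  intro hmt
  have ht0 : m • (t : G ⧸ H) = m • 0 := by
    rwa [zsmul_zero, ← QuotientAddGroup.mk_zsmul, QuotientAddGroup.eq_zero_iff]
  exact hQ.zero_notMem ((bijective_zsmul_of_isCoprime_card hm).injective ht0 ▸ ht)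

lemma union_preimage_mk {H : AddSubgroup G} {T : Set H} {Q : Set (G ⧸ H)}
    (hT : IsSplitting M r T) (hQ : IsSplitting M r Q)
    (hM : ∀ m ∈ M, IsCoprime m (Nat.card H : ℤ))
    (hr : ∀ m m', r m m' →
      IsCoprime m (Nat.card (G ⧸ H) : ℤ) ∧ IsCoprime m' (Nat.card (G ⧸ H) : ℤ)) :
    IsSplitting M r ((↑) '' T ∪ QuotientAddGroup.mk ⁻¹' Q : Set G) where
  zero_notMem := by
    rintro (⟨t, ht, ht0⟩ | h0)
    · exact hT.zero_notMem (ZeroMemClass.coe_eq_zero.1 ht0 ▸ ht)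
    · exact hQ.zero_notMem h0
  smul_ne_smul := by
    rintro m m' hmm _ _ (⟨s, hs, rfl⟩ | hs) (⟨t, ht, rfl⟩ | ht) h
    · exact hT.smul_ne_smul hmm hs ht (Subtype.ext h)
    · exact hQ.zsmul_notMem_of_mk_mem (hr _ _ hmm).2 ht (h ▸ H.zsmul_mem s.2 m)
    · exact hQ.zsmul_notMem_of_mk_mem (hr _ _ hmm).1 hs (h ▸ H.zsmul_mem t.2 m')
    · exact hQ.smul_ne_smul hmm hs ht (congrArg QuotientAddGroup.mk h)
  exists_smul_eq := by
    intro x hx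
    by_cases hxH : x ∈ H
    · obtain ⟨m, hm, t, ht, htx⟩ := hT.exists_smul_eq (x := ⟨x, hxH⟩) (by simpa using hx)
      exact ⟨m, hm, t, .inl ⟨t, ht, rfl⟩, congrArg Subtype.val htx⟩
    · obtain ⟨m, hm, q, hq, hqx⟩ :=
        hQ.exists_smul_eq (x := (x : G ⧸ H)) (by rwa [Ne, QuotientAddGroup.eq_zero_iff])
      obtain ⟨y, rfl⟩ := QuotientAddGroup.mk_surjective q
      have hyx : -(m • y) + x ∈ H := QuotientAddGroup.eq.1 hqx
      obtain ⟨h, hh⟩ := (bijective_zsmul_of_isCoprime_card (hM m hm)).surjective ⟨_, hyx⟩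
      have hmh : m • (h : G) = -(m • y) + x := congrArg Subtype.val hh
      refine ⟨m, hm, y + h, .inr ?_, by rw [zsmul_add, hmh, add_neg_cancel_left]⟩
      rwa [Set.mem_preimage, QuotientAddGroup.mk_add_of_mem _ h.2]

lemma neg_mem_of_notMem {T : Set G} (hT : IsSplitting {1, -1} r T) {g : G} (hg : g ∉ T)
    (hg0 : g ≠ 0) : -g ∈ T := by
  obtain ⟨m, hm, t, ht, rfl⟩ := hT.exists_smul_eq hg0
  rcases mem_insert.1 hm with rfl | hm
  · exact (hg (by rwa [one_zsmul])).elim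
  · rwa [mem_singleton.1 hm, neg_one_zsmul, neg_neg]

end IsSplitting

/-- Peel off a subgroup of prime order `q`, which is a copy of `ZMod q`. -/
theorem exists_isSplitting_of_forall_prime {G : Type*} [AddCommGroup G] [Finite G] {M : Finset ℤ}
    {r : ℤ → ℤ → Prop} (hM : ∀ m ∈ M, IsCoprime m (Nat.card G : ℤ))
    (hr : ∀ m m', r m m' → IsCoprime m (Nat.card G : ℤ) ∧ IsCoprime m' (Nat.card G : ℤ))
    (hprime : ∀ q, q.Prime → q ∣ Nat.card G → ∃ T : Set (ZMod q), IsSplitting M r T) :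
    ∃ T : Set G, IsSplitting M r T := by
  induction hn : Nat.card G using Nat.strong_induction_on generalizing G with
  | _ n ih =>
  subst hn
  rcases subsingleton_or_nontrivial G with hG | hG
  · exact ⟨∅, .empty⟩
  obtain ⟨q, hq, hqG⟩ := Nat.exists_prime_and_dvd (Finite.one_lt_card (α := G)).ne'
  have : Fact q.Prime := ⟨hq⟩
  obtain ⟨x, hx⟩ := exists_prime_addOrderOf_dvd_card' q hqG
  have hcardH : Nat.card (AddSubgroup.zmultiples x) = q := by rw [Nat.card_zmultiples, hx]
  have hcard : Nat.card G = Nat.card (G ⧸ AddSubgroup.zmultiples x) * q := by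
    rw [AddSubgroup.card_eq_card_quotient_mul_card_addSubgroup, hcardH]
  have hquot {m : ℤ} (hm : IsCoprime m (Nat.card G : ℤ)) :
      IsCoprime m (Nat.card (G ⧸ AddSubgroup.zmultiples x) : ℤ) :=
    hm.of_isCoprime_of_dvd_right (Int.natCast_dvd_natCast.2 (Dvd.intro _ hcard.symm))
  obtain ⟨Q, hQ⟩ := ih _ (by rw [hcard]; exact lt_mul_of_one_lt_right Nat.card_pos hq.one_lt)
    (fun m hm => hquot (hM m hm)) (fun m m' h => ⟨hquot (hr m m' h).1, hquot (hr m m' h).2⟩)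
    (fun q' hq' hdvd => hprime q' hq' (hcard ▸ hdvd.mul_right q)) rfl
  obtain ⟨T, hT⟩ := hprime q hq hqG
  have e : ZMod q ≃+ AddSubgroup.zmultiples x := hcardH ▸ zmodAddCyclicAddEquiv inferInstance
  refine ⟨_, (hT.image e).union_preimage_mk hQ (fun m hm => ?_) fun m m' h =>
    ⟨hquot (hr m m' h).1, hquot (hr m m' h).2⟩⟩
  exact (hM m hm).of_isCoprime_of_dvd_right
    (Int.natCast_dvd_natCast.2 (AddSubgroup.card_addSubgroup_dvd_card _))

/-- The usual notion of a splitting: all dilates of `T` by distinct multipliers are disjoint. -/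
abbrev IsExactSplitting {G : Type*} [AddCommGroup G] (M : Finset ℤ) (T : Set G) : Prop :=
  IsSplitting M (fun m m' => m ∈ M ∧ m' ∈ M ∧ m ≠ m') T

/-- `T` contains one of `x`, `-x` for every `x ≠ 0` and is sent to disjoint sets by any two
multipliers of opposite sign, less than `k` in absolute value, that are congruent modulo `k`. -/
abbrev IsSignSplitting {G : Type*} [AddCommGroup G] (k : ℕ) (T : Set G) : Prop :=
  IsSplitting {1, -1} (fun m m' => 0 < m ∧ m < k ∧ m' = m - k) T

lemma IsExactSplitting.card_eq {G : Type*} [AddCommGroup G] [Finite G] {M : Finset ℤ} {T : Finset G}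
    (hT : IsExactSplitting M (T : Set G))
    (hM : ∀ m ∈ M, IsCoprime m (Nat.card G : ℤ)) : Nat.card G = #M * #T + 1 := by
  classical
  have := Fintype.ofFinite G
  have hinj : ∀ m ∈ M, Function.Injective (m • · : G → G) :=
    fun m hm => (bijective_zsmul_of_isCoprime_card (hM m hm)).injective
  have himage : (M ×ˢ T).image (fun x => x.1 • x.2) = univ.erase 0 := by
    ext x
    simp only [mem_image, mem_product, mem_erase, mem_univ, and_true, Prod.exists]
    constructor
    · rintro ⟨m, t, ⟨hm, ht⟩, rfl⟩ h
      exact hT.zero_notMem (hinj m hm (h.trans (smul_zero m).symm) ▸ ht)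
    · intro hx
      obtain ⟨m, hm, t, ht, rfl⟩ := hT.exists_smul_eq hx
      exact ⟨m, t, ⟨hm, ht⟩, rfl⟩
  have hinjOn : Set.InjOn (fun x : ℤ × G => x.1 • x.2) (M ×ˢ T : Finset (ℤ × G)) := by
    rintro ⟨m, s⟩ hms ⟨m', t⟩ hmt h
    obtain ⟨hm, hs⟩ := mem_product.1 hms
    obtain ⟨hm', ht⟩ := mem_product.1 hmt
    obtain rfl : m = m' := by
      by_contra hne
      exact hT.smul_ne_smul ⟨hm, hm', hne⟩ hs ht h
    exact congrArg (m, ·) (hinj m hm h)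
  rw [← card_product, ← card_image_of_injOn hinjOn, himage, card_erase_add_one (mem_univ 0),
    card_univ, Nat.card_eq_fintype_card]

end Splittings

section PrimeFields

lemma isSplitting_quadraticChar_eq_one {F : Type*} [Field F] [Fintype F] [DecidableEq F]
    {r : ℤ → ℤ → Prop} (hneg : quadraticChar F (-1) = -1)
    (hr : ∀ m m', r m m' → quadraticChar F (m : F) * quadraticChar F (m' : F) = -1) :
    IsSplitting {1, -1} r {x : F | quadraticChar F x = 1} where
  zero_notMem := by simp
  smul_ne_smul := by
    intro m m' hmm s t hs ht h
    have hchar : quadraticChar F (m : F) = quadraticChar F (m' : F) := by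
      simpa only [zsmul_eq_mul, map_mul, hs.out, ht.out, mul_one] using congrArg (quadraticChar F) h
    have := hr m m' hmm
    rw [hchar] at this
    nlinarith [mul_self_nonneg (quadraticChar F (m' : F))]
  exists_smul_eq := by
    intro x hx
    rcases quadraticChar_dichotomy hx with h | h
    · exact ⟨1, by simp, x, h, one_zsmul x⟩
    · refine ⟨-1, by simp, -x, ?_, by simp⟩
      rw [Set.mem_ofPred_eq, ← neg_one_mul, map_mul, hneg, h, neg_mul_neg, one_mul]

end PrimeFields

section EquiDifference

/-- The integers `m ≠ 0` with `|m| ≤ k`: the multiples of a generator that occur as differences in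
an equi-difference codeword of weight `k + 1`. -/
noncomputable def multipliers (k : ℕ) : Finset ℤ := (Icc (-k : ℤ) k).erase 0

variable {k L : ℕ}

lemma mem_multipliers {m : ℤ} : m ∈ multipliers k ↔ m ≠ 0 ∧ m.natAbs ≤ k := by
  rw [multipliers, mem_erase, mem_Icc]
  lia

lemma card_multipliers (k : ℕ) : #(multipliers k) = 2 * k := by
  rw [multipliers, card_erase_of_mem (by simp), Int.card_Icc]
  lia

lemma isCoprime_of_mem_multipliers {N : ℕ} {m : ℤ} (hN : ∀ q, q.Prime → q ∣ N → k < q)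
    (hm : m ∈ multipliers k) : IsCoprime m (N : ℤ) := by
  obtain ⟨hm0, hmk⟩ := mem_multipliers.1 hm
  rw [Int.isCoprime_iff_gcd_eq_one, Int.gcd_eq_natAbs, Int.natAbs_natCast]
  refine Nat.coprime_of_dvd fun q hq hqm hqN => ?_
  exact ((Nat.le_of_dvd (Int.natAbs_pos.2 hm0) hqm).trans hmk).not_gt (hN q hq hqN)

lemma injective_zsmul_of_mem_multipliers {G : Type*} [AddCommGroup G] {m : ℤ}
    (hG : ∀ q, q.Prime → q ∣ Nat.card G → k < q) (hm : m ∈ multipliers k) :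
    Function.Injective (m • · : G → G) :=
  (bijective_zsmul_of_isCoprime_card (isCoprime_of_mem_multipliers hG hm)).injective

lemma zsmul_ne_zero_of_mem_multipliers {G : Type*} [AddCommGroup G] {m : ℤ} {g : G}
    (hG : ∀ q, q.Prime → q ∣ Nat.card G → k < q) (hm : m ∈ multipliers k) (hg : g ≠ 0) :
    m • g ≠ 0 := fun h =>
  hg (injective_zsmul_of_mem_multipliers hG hm (h.trans (zsmul_zero m).symm))

lemma generator_ne_zero {g : ZMod L} (hk : 0 < k)
    (hg : #((range (k + 1)).image fun j : ℕ => (j : ZMod L) * g) = k + 1) : g ≠ 0 := by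
  rintro rfl
  simp only [mul_zero, image_const nonempty_range_add_one, card_singleton] at hg
  lia

lemma zsmul_mem_dstar {m : ℤ} {g : ZMod L} (hm : m ∈ multipliers k) (hmg : m • g ≠ 0) :
    m • g ∈ dstar ((range (k + 1)).image fun j : ℕ => (j : ZMod L) * g) := by
  have hmk := (mem_multipliers.1 hm).2
  refine mem_erase.2 ⟨hmg, mem_image.2 ⟨((m.toNat : ZMod L) * g, ((-m).toNat : ZMod L) * g),
    mem_product.2 ⟨mem_image_of_mem _ (mem_range.2 (by lia)),
      mem_image_of_mem _ (mem_range.2 (by lia))⟩, ?_⟩⟩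
  rw [← sub_mul, zsmul_eq_mul]
  conv_rhs => rw [← Int.toNat_sub_toNat_neg m]
  push_cast
  rfl

variable {C : Finset (Finset (ZMod L))} {g : Finset (ZMod L) → ZMod L}

lemma IsCAC.injOn_zsmul (hC : IsCAC L (k + 1) C)
    (hL : ∀ q, q.Prime → q ∣ Nat.card (ZMod L) → 2 * k < q)
    (hg : ∀ S ∈ C, S = (range (k + 1)).image fun j : ℕ => (j : ZMod L) * g S)
    (hg0 : ∀ S ∈ C, g S ≠ 0) :
    Set.InjOn (fun x : ℤ × Finset (ZMod L) => x.1 • g x.2) (multipliers k ×ˢ C) := by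
  have hmem : ∀ {m : ℤ} {S}, m ∈ multipliers k → S ∈ C → m • g S ∈ dstar S := by
    intro m S hm hS
    have hmg := zsmul_ne_zero_of_mem_multipliers
      (fun q hq hqL => (Nat.le_mul_of_pos_left k two_pos).trans_lt (hL q hq hqL)) hm (hg0 S hS)
    have hmem := zsmul_mem_dstar hm hmg
    rwa [← hg S hS] at hmem
  rintro ⟨m, S⟩ ⟨hm, hS⟩ ⟨m', S'⟩ ⟨hm', hS'⟩ h
  dsimp only at h hm hm' hS hS'
  obtain rfl : S = S' := by
    by_contra hne
    exact disjoint_left.1 (hC.2 S hS S' hS' hne) (hmem hm hS) (h ▸ hmem hm' hS')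
  obtain rfl : m = m' := by
    by_contra hne
    have hsub : m - m' ∈ multipliers (2 * k) := by
      rw [mem_coe, mem_multipliers] at hm hm'
      rw [mem_multipliers]
      lia
    refine zsmul_ne_zero_of_mem_multipliers hL hsub (hg0 S hS) ?_
    rw [sub_smul, h, sub_self]
  rfl

/-- The `2k · #C = L - 1` elements `m • g S` are distinct and nonzero, so they exhaust `ZMod L`. -/
lemma IsCAC.isExactSplitting (hC : IsCAC L (k + 1) C) (hk : 0 < k)
    (hL : ∀ q, q.Prime → q ∣ Nat.card (ZMod L) → 2 * k < q) (hcard : 2 * k * #C + 1 = L)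
    (hg : ∀ S ∈ C, S = (range (k + 1)).image fun j : ℕ => (j : ZMod L) * g S) :
    IsExactSplitting (multipliers k) (g '' C) := by
  have hg0 : ∀ S ∈ C, g S ≠ 0 := fun S hS => generator_ne_zero hk (hg S hS ▸ hC.1 S hS)
  have hinj := hC.injOn_zsmul hL hg hg0
  refine ⟨?_, ?_, fun {x} hx => ?_⟩
  · rintro ⟨S, hS, h0⟩
    exact hg0 S hS h0
  · rintro m m' ⟨hm, hm', hne⟩ _ _ ⟨S, hS, rfl⟩ ⟨S', hS', rfl⟩ h
    exact hne (congrArg Prod.fst (@hinj (m, S) ⟨hm, hS⟩ (m', S') ⟨hm', hS'⟩ h))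
  · have : NeZero L := ⟨by lia⟩
    have himage : (multipliers k ×ˢ C).image (fun x => x.1 • g x.2) = univ.erase 0 := by
      refine eq_of_subset_of_card_le (fun y hy => ?_) ?_
      · obtain ⟨⟨m, S⟩, hmS, rfl⟩ := mem_image.1 hy
        obtain ⟨hm, hS⟩ := mem_product.1 hmS
        have hmg := zsmul_ne_zero_of_mem_multipliers
          (fun q hq hqL => (Nat.le_mul_of_pos_left k two_pos).trans_lt (hL q hq hqL)) hm (hg0 S hS)
        exact mem_erase.2 ⟨hmg, mem_univ _⟩
      · rw [card_image_of_injOn (by rwa [coe_product]), card_product, card_multipliers,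
          card_erase_of_mem (mem_univ _), card_univ, ZMod.card]
        lia
    obtain ⟨⟨m, S⟩, hmS, rfl⟩ := mem_image.1 (himage.ge (mem_erase.2 ⟨hx, mem_univ x⟩))
    obtain ⟨hm, hS⟩ := mem_product.1 hmS
    exact ⟨m, hm, g S, ⟨S, hS, rfl⟩, rfl⟩

lemma exists_isExactSplitting_of_prime {q : ℕ} (hq : q.Prime) (hk : 0 < k) (hdvd : 2 * k ∣ q - 1)
    (hC : ∃ C : Finset (Finset (ZMod q)), IsCAC q (k + 1) C ∧ (∀ S ∈ C, IsEquiDiff (k + 1) S) ∧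
      #C = (q - 1) / (2 * k)) :
    ∃ T : Set (ZMod q), IsExactSplitting (multipliers k) T := by
  obtain ⟨C, hC, hE, hcard⟩ := hC
  choose! g hg using hE
  have hq2 := hq.two_le
  refine ⟨_, hC.isExactSplitting hk (fun q' hq' hdvd' => ?_) ?_ hg⟩
  · rw [Nat.card_zmod, Nat.prime_dvd_prime_iff_eq hq' hq] at hdvd'
    have := Nat.le_of_dvd (by lia) hdvd
    lia
  · rw [hcard, Nat.mul_div_cancel' hdvd]
    lia

end EquiDifference

section ChannelAssignment

/-- The condition on `χ` under which the codewords `{(j, j • g) | j < k} ⊆ ZMod k × G`, each put on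
its channel `χ g`, have pairwise disjoint differences within every channel. -/
def IsChannelAssignment {G : Type*} [AddCommGroup G] (k : ℕ) (χ : G → Fin 2) : Prop :=
  ∀ ⦃g g'⦄, χ g = χ g' → ∀ ⦃d d' : ℤ⦄, d ≠ 0 → d.natAbs < k → d'.natAbs < k →
    (d : ZMod k) = d' → d • g = d' • g' → g = g'

variable {k : ℕ}

lemma eq_or_eq_sub_or_eq_sub_of_intCast_zmod_eq {d d' : ℤ} (hd : d.natAbs < k)
    (hd' : d'.natAbs < k) (h : (d : ZMod k) = d') : d = d' ∨ d' = d - k ∨ d = d' - k := by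
  obtain ⟨c, hc⟩ := (ZMod.intCast_eq_intCast_iff_dvd_sub d d' k).1 h
  have hlt : (k : ℤ) * c < k * 2 := by lia
  have hgt : (k : ℤ) * (-2) < k * c := by lia
  have := lt_of_mul_lt_mul_left hlt (by positivity)
  have := lt_of_mul_lt_mul_left hgt (by positivity)
  obtain rfl | rfl | rfl : c = -1 ∨ c = 0 ∨ c = 1 := by lia
  all_goals lia

variable {G : Type*} [AddCommGroup G]

lemma IsSignSplitting.eq_of_zsmul_eq_sub_zsmul {T : Set G} (hT : IsSignSplitting k T)
    (hG : ∀ q, q.Prime → q ∣ Nat.card G → k < q) {m : ℤ} (hm0 : 0 < m) (hmk : m < k) {g g' : G}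
    (hgg' : g ∈ T ↔ g' ∈ T) (h : m • g = (m - k) • g') : g = g' := by
  by_cases hg : g ∈ T
  · exact (hT.smul_ne_smul ⟨hm0, hmk, rfl⟩ hg (hgg'.1 hg) h).elim
  rcases eq_or_ne g 0 with rfl | hg0
  · exact (injective_zsmul_of_mem_multipliers (m := m - k) hG (mem_multipliers.2 (by lia))
      (by simpa using h.symm)).symm
  rcases eq_or_ne g' 0 with rfl | hg0'
  · exact injective_zsmul_of_mem_multipliers (m := m) hG (mem_multipliers.2 (by lia))
      (by simpa using h)
  refine (hT.smul_ne_smul ⟨hm0, hmk, rfl⟩ (hT.neg_mem_of_notMem hg hg0)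
    (hT.neg_mem_of_notMem (hgg'.not.1 hg) hg0') ?_).elim
  rw [zsmul_neg, zsmul_neg, h]

open scoped Classical in
lemma IsSignSplitting.isChannelAssignment {T : Set G} (hT : IsSignSplitting k T)
    (hG : ∀ q, q.Prime → q ∣ Nat.card G → k < q) :
    IsChannelAssignment k fun g => if g ∈ T then 0 else 1 := by
  intro g g' hχ d d' hd0 hd hd' hdd' h
  have hgg' : g ∈ T ↔ g' ∈ T := by
    by_cases hg : g ∈ T <;> by_cases hg' : g' ∈ T <;> simp_all
  rcases eq_or_eq_sub_or_eq_sub_of_intCast_zmod_eq hd hd' hdd' with rfl | rfl | rfl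
  · exact injective_zsmul_of_mem_multipliers hG (mem_multipliers.2 ⟨hd0, hd.le⟩) h
  · exact hT.eq_of_zsmul_eq_sub_zsmul hG (by lia) (by lia) hgg' h
  · exact (hT.eq_of_zsmul_eq_sub_zsmul hG (by lia) (by lia) hgg'.symm h.symm).symm

end ChannelAssignment

section Construction

lemma exists_mem_Darr {M L : ℕ} {S : Finset (Fin M × ZMod L)} (hS : 1 < #S) :
    ∃ i j t, t ∈ Darr S i j := by
  obtain ⟨⟨i, a⟩, ha, ⟨j, b⟩, hb, hne⟩ := one_lt_card.1 hS
  refine ⟨i, j, a - b, mem_Darr.2 ⟨?_, a, b, ha, hb, rfl⟩⟩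
  rintro rfl hab
  exact hne (by rw [sub_eq_zero.1 hab])

lemma isMCCAC_image {M L w : ℕ} {ι : Type*} {I : Finset ι} {F : ι → Finset (Fin M × ZMod L)}
    (hcard : ∀ α ∈ I, #(F α) = w)
    (hF : ∀ α ∈ I, ∀ β ∈ I, ∀ i j t, t ∈ Darr (F α) i j → t ∈ Darr (F β) i j → α = β) :
    IsMCCAC M L w (I.image F) := by
  refine ⟨forall_mem_image.2 hcard, forall_mem_image.2 fun α hα => forall_mem_image.2
    fun β hβ hne i j => disjoint_left.2 fun t htα htβ => hne ?_⟩
  rw [hF α hα β hβ i j t htα htβ]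

lemma injOn_of_forall_mem_Darr {M L : ℕ} {ι : Type*} {I : Finset ι}
    {F : ι → Finset (Fin M × ZMod L)} (hcard : ∀ α ∈ I, 1 < #(F α))
    (hF : ∀ α ∈ I, ∀ β ∈ I, ∀ i j t, t ∈ Darr (F α) i j → t ∈ Darr (F β) i j → α = β) :
    Set.InjOn F I := by
  intro α hα β hβ h
  obtain ⟨i, j, t, ht⟩ := exists_mem_Darr (hcard α hα)
  exact hF α hα β hβ i j t ht (h ▸ ht)

variable {k L : ℕ} {G : Type*} [AddCommGroup G]

/-- The codeword with the points `±e (j, (j + 1) • g)`, `j < k`, on channel `c` and the point `0` on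
the other channel. The sign is `+` for `c = 0` and `-` for `c = 1`, which makes the differences from
channel `0` to channel `1` equal to `e (j, (j + 1) • g)` in both cases. -/
def mixedWord (e : ZMod k × G ≃+ ZMod L) (c : Fin 2) (g : G) : Finset (Fin 2 × ZMod L) :=
  insert (c + 1, 0) ((range k).image fun j : ℕ => (c, (-1 : ℤ) ^ (c : ℕ) • e (j, (j + 1) • g)))

/-- The equi-difference codeword with generator `e (0, g)` on the single channel `c`. -/
def pureWord (e : ZMod k × G ≃+ ZMod L) (c : Fin 2) (g : G) : Finset (Fin 2 × ZMod L) :=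
  (range (k + 1)).image fun j : ℕ => (c, e (0, j • g))

variable {e : ZMod k × G ≃+ ZMod L} {c : Fin 2} {g : G}

lemma eq_of_natCast_zmod_eq_of_lt {i j : ℕ} (hi : i < k) (hj : j < k) (h : (i : ZMod k) = j) :
    i = j :=
  Nat.ModEq.eq_of_lt_of_lt ((ZMod.natCast_eq_natCast_iff _ _ _).1 h) hi hj

lemma card_mixedWord : #(mixedWord e c g) = k + 1 := by
  rw [mixedWord, card_insert_of_notMem, card_image_of_injOn, card_range]
  · intro i hi j hj h
    have hij : e (i, (i + 1) • g) = e (j, (j + 1) • g) :=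
      ((isUnit_one.neg.pow (c : ℕ) : IsUnit ((-1 : ℤ) ^ (c : ℕ))).smul_left_cancel).1
        (congrArg Prod.snd h)
    exact eq_of_natCast_zmod_eq_of_lt (mem_range.1 hi) (mem_range.1 hj)
      (congrArg Prod.fst (e.injective hij))
  · rw [mem_image]
    rintro ⟨j, -, h⟩
    have := congrArg Prod.fst h
    fin_cases c <;> simp at this

lemma card_pureWord (hG : ∀ q, q.Prime → q ∣ Nat.card G → k < q) (hg : g ≠ 0) :
    #(pureWord e c g) = k + 1 := by
  rw [pureWord, card_image_of_injOn, card_range]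
  intro i hi j hj h
  have hij : i • g = j • g := congrArg Prod.snd (e.injective (congrArg Prod.snd h))
  by_contra hne
  rw [mem_coe, mem_range] at hi hj
  refine zsmul_ne_zero_of_mem_multipliers (m := i - j) hG (mem_multipliers.2 (by lia)) hg ?_
  rw [sub_smul, natCast_zsmul, natCast_zsmul, hij, sub_self]

lemma mem_mixedWord {i : Fin 2} {a : ZMod L} :
    (i, a) ∈ mixedWord e c g ↔
      i = c + 1 ∧ a = 0 ∨ i = c ∧ ∃ j < k, (-1 : ℤ) ^ (c : ℕ) • e (j, (j + 1) • g) = a := by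
  simp only [mixedWord, mem_insert, mem_image, mem_range, Prod.mk.injEq]
  exact or_congr Iff.rfl ⟨fun ⟨j, hj, hi, ha⟩ => ⟨hi.symm, j, hj, ha⟩,
    fun ⟨hi, j, hj, ha⟩ => ⟨j, hj, hi.symm, ha⟩⟩

lemma exists_of_mem_Darr_self_mixedWord {i : Fin 2} {t : ZMod L}
    (ht : t ∈ Darr (mixedWord e c g) i i) :
    c = i ∧ ∃ d : ℤ, d ≠ 0 ∧ d.natAbs < k ∧ e (d, d • g) = t := by
  obtain ⟨ht0, a, b, ha, hb, rfl⟩ := mem_Darr.1 ht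
  have hc : c ≠ c + 1 := by fin_cases c <;> decide
  rcases mem_mixedWord.1 ha with ⟨rfl, rfl⟩ | ⟨rfl, x, hx, rfl⟩ <;>
    rcases mem_mixedWord.1 hb with ⟨hi, rfl⟩ | ⟨hi, y, hy, rfl⟩
  · exact (ht0 rfl (sub_self 0)).elim
  · exact (hc hi.symm).elim
  · exact (hc hi).elim
  have hxy : x ≠ y := by
    rintro rfl
    exact ht0 rfl (sub_self _)
  refine ⟨rfl, (-1) ^ (i : ℕ) * (x - y), ?_, ?_, ?_⟩
  · rw [Ne, mul_eq_zero, sub_eq_zero, Nat.cast_inj]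
    simpa using hxy
  · rw [Int.natAbs_mul, Int.natAbs_pow, Int.natAbs_neg, Int.natAbs_one, one_pow, one_mul]
    lia
  · rw [← zsmul_sub, ← map_sub, ← map_zsmul]
    congr 1
    ext
    · simp
    · simp [mul_smul, sub_smul, add_smul]

lemma exists_of_mem_Darr_zero_one_mixedWord {t : ZMod L}
    (ht : t ∈ Darr (mixedWord e c g) 0 1) : ∃ j < k, e (j, (j + 1) • g) = t := by
  obtain ⟨-, a, b, ha, hb, rfl⟩ := mem_Darr.1 ht
  rw [mem_mixedWord] at ha hb
  fin_cases c
  · simp_all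
  · obtain rfl : a = 0 := by simpa using ha
    obtain ⟨j, hj, rfl⟩ : ∃ j < k, -e (j, (j + 1) • g) = b := by simpa using hb
    exact ⟨j, hj, by simp⟩

lemma exists_of_mem_Darr_pureWord {i j : Fin 2} {t : ZMod L} (ht : t ∈ Darr (pureWord e c g) i j) :
    c = i ∧ c = j ∧ ∃ d ∈ multipliers k, e (0, d • g) = t := by
  obtain ⟨ht0, a, b, ha, hb, rfl⟩ := mem_Darr.1 ht
  simp only [pureWord, mem_image, mem_range, Prod.mk.injEq] at ha hb
  obtain ⟨x, hx, rfl, rfl⟩ := ha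
  obtain ⟨y, hy, rfl, rfl⟩ := hb
  refine ⟨rfl, rfl, x - y, mem_multipliers.2 ⟨?_, by lia⟩, ?_⟩
  · intro hxy
    obtain rfl : x = y := by lia
    exact ht0 rfl (sub_self _)
  · rw [← map_sub, Prod.mk_sub_mk, sub_zero, sub_smul, natCast_zsmul, natCast_zsmul]

lemma eq_of_mem_Darr_mixedWord {χ : G → Fin 2} (hχ : IsChannelAssignment k χ)
    (hG : ∀ q, q.Prime → q ∣ Nat.card G → k < q) {g g' : G} {i j : Fin 2} {t : ZMod L}
    (ht : t ∈ Darr (mixedWord e (χ g) g) i j) (ht' : t ∈ Darr (mixedWord e (χ g') g') i j) :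
    g = g' := by
  have hcross : ∀ {t}, t ∈ Darr (mixedWord e (χ g) g) 0 1 →
      t ∈ Darr (mixedWord e (χ g') g') 0 1 → g = g' := by
    intro t ht ht'
    obtain ⟨x, hx, rfl⟩ := exists_of_mem_Darr_zero_one_mixedWord ht
    obtain ⟨y, hy, h⟩ := exists_of_mem_Darr_zero_one_mixedWord ht'
    obtain ⟨hyx, hsmul⟩ := Prod.mk.inj (e.injective h)
    obtain rfl := eq_of_natCast_zmod_eq_of_lt hy hx hyx
    refine injective_zsmul_of_mem_multipliers (m := (y + 1 : ℕ)) hG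
      (mem_multipliers.2 (by lia)) ?_
    simpa only [natCast_zsmul] using hsmul.symm
  obtain rfl | hij := eq_or_ne i j
  · obtain ⟨hi, d, hd0, hd, rfl⟩ := exists_of_mem_Darr_self_mixedWord ht
    obtain ⟨hi', d', -, hd', h⟩ := exists_of_mem_Darr_self_mixedWord ht'
    obtain ⟨hdd', hsmul⟩ := Prod.mk.inj (e.injective h)
    exact hχ (hi.trans hi'.symm) hd0 hd hd' hdd'.symm hsmul.symm
  · obtain ⟨rfl, rfl⟩ | ⟨rfl, rfl⟩ : i = 0 ∧ j = 1 ∨ i = 1 ∧ j = 0 := by lia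
    · exact hcross ht ht'
    · exact hcross (neg_mem_Darr ht) (neg_mem_Darr ht')

lemma disjoint_Darr_mixedWord_pureWord {c c' : Fin 2} {g g' : G} (i j : Fin 2) :
    Disjoint (Darr (mixedWord e c g) i j) (Darr (pureWord e c' g') i j) := by
  refine disjoint_left.2 fun t ht ht' => ?_
  obtain ⟨rfl, rfl, d', -, rfl⟩ := exists_of_mem_Darr_pureWord ht'
  obtain ⟨-, d, hd0, hd, h⟩ := exists_of_mem_Darr_self_mixedWord ht
  have hdvd := (ZMod.intCast_zmod_eq_zero_iff_dvd d k).1 (Prod.mk.inj (e.injective h)).1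
  exact hd0 (Int.eq_zero_of_dvd_of_natAbs_lt_natAbs hdvd (by simpa using hd))

lemma eq_of_mem_Darr_pureWord {T : Set G} (hT : IsExactSplitting (multipliers k) T)
    (hG : ∀ q, q.Prime → q ∣ Nat.card G → k < q) {c c' : Fin 2} {g g' : G} (hg : g ∈ T)
    (hg' : g' ∈ T) {i j : Fin 2} {t : ZMod L} (ht : t ∈ Darr (pureWord e c g) i j)
    (ht' : t ∈ Darr (pureWord e c' g') i j) : c = c' ∧ g = g' := by
  obtain ⟨rfl, -, d, hd, rfl⟩ := exists_of_mem_Darr_pureWord ht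
  obtain ⟨rfl, -, d', hd', h⟩ := exists_of_mem_Darr_pureWord ht'
  have hsmul := (Prod.mk.inj (e.injective h)).2
  obtain rfl : d = d' := by
    by_contra hne
    exact hT.smul_ne_smul ⟨hd, hd', hne⟩ hg hg' hsmul.symm
  exact ⟨rfl, injective_zsmul_of_mem_multipliers hG hd hsmul.symm⟩

/-- One mixed word for every `g ∈ G` and two pure words, one per channel, for every `g ∈ T`. -/
theorem exists_isMCCAC_card_eq [Finite G] {χ : G → Fin 2} {T : Finset G} (e : ZMod k × G ≃+ ZMod L)
    (hk : 0 < k) (hG : ∀ q, q.Prime → q ∣ Nat.card G → k < q) (hχ : IsChannelAssignment k χ)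
    (hT : IsExactSplitting (multipliers k) (T : Set G)) :
    ∃ C, IsMCCAC 2 L (k + 1) C ∧ #C = Nat.card G + 2 * #T := by
  have := Fintype.ofFinite G
  let F : G ⊕ Fin 2 × G → Finset (Fin 2 × ZMod L) :=
    Sum.elim (fun g => mixedWord e (χ g) g) fun cg => pureWord e cg.1 cg.2
  have hcard : ∀ α ∈ univ.disjSum (univ ×ˢ T), #(F α) = k + 1 := by
    rintro (g | ⟨c, g⟩) hmem
    · exact card_mixedWord
    · have hg : g ∈ T := by simpa using hmem
      exact card_pureWord hG fun hg0 => hT.zero_notMem (hg0 ▸ hg)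
  have hdisj : ∀ α ∈ univ.disjSum (univ ×ˢ T), ∀ β ∈ univ.disjSum (univ ×ˢ T), ∀ i j t,
      t ∈ Darr (F α) i j → t ∈ Darr (F β) i j → α = β := by
    rintro (g | ⟨c, g⟩) hα (g' | ⟨c', g'⟩) hβ i j t ht ht'
    · exact congrArg Sum.inl (eq_of_mem_Darr_mixedWord hχ hG ht ht')
    · exact (disjoint_left.1 (disjoint_Darr_mixedWord_pureWord i j) ht ht').elim
    · exact (disjoint_left.1 (disjoint_Darr_mixedWord_pureWord i j) ht' ht).elim
    · have hg : g ∈ T := by simpa using hα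
      have hg' : g' ∈ T := by simpa using hβ
      obtain ⟨rfl, rfl⟩ := eq_of_mem_Darr_pureWord hT hG hg hg' ht ht'
      rfl
  refine ⟨_, isMCCAC_image hcard hdisj, ?_⟩
  rw [card_image_of_injOn (injOn_of_forall_mem_Darr (fun α hα => by rw [hcard α hα]; lia) hdisj),
    card_disjSum, card_product, card_univ, card_univ, Fintype.card_fin, Nat.card_eq_fintype_card]

end Construction

section MainTheorem

variable {k N : ℕ}

lemma exists_isChannelAssignment {G : Type*} [AddCommGroup G] [Finite G]
    (hG : ∀ q, q.Prime → q ∣ Nat.card G → k < q)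
    (hsplit : ∀ q, q.Prime → q ∣ Nat.card G → ∃ T : Set (ZMod q), IsSignSplitting k T) :
    ∃ χ : G → Fin 2, IsChannelAssignment k χ := by
  have hunit : ∀ m ∈ ({1, -1} : Finset ℤ), IsCoprime m (Nat.card G : ℤ) := by
    simp [isCoprime_one_left, IsCoprime.neg_left_iff]
  have hshift : ∀ m m' : ℤ, 0 < m ∧ m < k ∧ m' = m - k →
      IsCoprime m (Nat.card G : ℤ) ∧ IsCoprime m' (Nat.card G : ℤ) := by
    rintro m _ ⟨hm0, hmk, rfl⟩
    exact ⟨isCoprime_of_mem_multipliers hG (mem_multipliers.2 (by lia)),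
      isCoprime_of_mem_multipliers hG (mem_multipliers.2 (by lia))⟩
  obtain ⟨T, hT⟩ : ∃ T : Set G, IsSignSplitting k T :=
    exists_isSplitting_of_forall_prime hunit hshift hsplit
  classical
  exact ⟨_, hT.isChannelAssignment hG⟩

lemma exists_isExactSplitting_of_forall_prime {G : Type*} [AddCommGroup G] [Finite G]
    (hG : ∀ q, q.Prime → q ∣ Nat.card G → k < q)
    (hsplit : ∀ q, q.Prime → q ∣ Nat.card G →
      ∃ T : Set (ZMod q), IsExactSplitting (multipliers k) T) :
    ∃ T : Finset G, IsExactSplitting (multipliers k) (T : Set G) := by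
  obtain ⟨T, hT⟩ := exists_isSplitting_of_forall_prime
    (fun m hm => isCoprime_of_mem_multipliers hG hm)
    (fun m m' h => ⟨isCoprime_of_mem_multipliers hG h.1, isCoprime_of_mem_multipliers hG h.2.1⟩)
    hsplit
  exact ⟨T.toFinite.toFinset, by rwa [Set.Finite.coe_toFinset]⟩

theorem isGreatest_card_isMCCAC (hk : 0 < k) (hN : ∀ q, q.Prime → q ∣ N → 2 * k < q)
    (hsign : ∀ q, q.Prime → q ∣ N → ∃ T : Set (ZMod q), IsSignSplitting k T)
    (hexact : ∀ q, q.Prime → q ∣ N → ∃ T : Set (ZMod q), IsExactSplitting (multipliers k) T) :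
    IsGreatest {m | ∃ C : Finset (Finset (Fin 2 × ZMod (k * N))),
      IsMCCAC 2 (k * N) (k + 1) C ∧ #C = m} (N + (N - 1) / k) := by
  have hN0 : 0 < N := Nat.pos_of_ne_zero fun h => by
    have := hN 2 Nat.prime_two (h ▸ dvd_zero 2)
    lia
  have : NeZero N := ⟨hN0.ne'⟩
  have : NeZero (k * N) := ⟨by positivity⟩
  have hcard : Nat.card (ZMod N) = N := Nat.card_zmod N
  have hNk : ∀ q, q.Prime → q ∣ Nat.card (ZMod N) → k < q := fun q hq hqN => by
    have := hN q hq (hcard ▸ hqN)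
    lia
  obtain ⟨χ, hχ⟩ := exists_isChannelAssignment hNk (by rwa [hcard])
  obtain ⟨T, hT⟩ := exists_isExactSplitting_of_forall_prime hNk (by rwa [hcard])
  have hNT : N = 2 * k * #T + 1 := by
    rw [← card_multipliers, ← hT.card_eq fun m hm => isCoprime_of_mem_multipliers hNk hm, hcard]
  have hdiv : (N - 1) / k = 2 * #T := by
    rw [Nat.div_eq_iff_eq_mul_left hk ⟨2 * #T, by lia⟩]
    lia
  have hcop : k.Coprime N := Nat.isCoprime_iff_coprime.1 <| hcard ▸
    isCoprime_of_mem_multipliers hNk (mem_multipliers.2 (by lia))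
  rw [hdiv]
  constructor
  · have h := exists_isMCCAC_card_eq (ZMod.chineseRemainder hcop).symm.toAddEquiv hk hNk hχ hT
    rwa [hcard] at h
  · rintro _ ⟨C, hC, rfl⟩
    have hle := hC.mul_card_le hk hN0 (card_dvd_or_lt_card_of_addSubgroup_zmod hN)
    have : k * #C < k * (N + 2 * #T + 1) := by lia
    exact Nat.lt_succ_iff.1 (lt_of_mul_lt_mul_left this (Nat.zero_le k))

lemma exists_isSignSplitting_of_legendreSym {q : ℕ} [Fact q.Prime] (hneg : legendreSym q (-1) = -1)
    (hj : ∀ j : ℕ, 0 < j → j < k → legendreSym q j * legendreSym q (j - k) = -1) :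
    ∃ T : Set (ZMod q), IsSignSplitting k T := by
  refine ⟨_, isSplitting_quadraticChar_eq_one (by simpa [legendreSym] using hneg) ?_⟩
  rintro m _ ⟨hm0, hmk, rfl⟩
  lift m to ℕ using hm0.le
  exact hj m (by lia) (by lia)

lemma forall_prime_dvd_prod_pow {ι : Type*} {s : Finset ι} {p r : ι → ℕ} {P : ℕ → Prop}
    (hp : ∀ i ∈ s, (p i).Prime) (hP : ∀ i ∈ s, P (p i)) :
    ∀ q, q.Prime → q ∣ ∏ i ∈ s, p i ^ r i → P q := by
  intro q hq hdvd
  obtain ⟨i, hi, hqi⟩ := (hq.prime.dvd_finsetProd_iff _).1 hdvd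
  rw [(Nat.prime_dvd_prime_iff_eq hq (hp i hi)).1 (hq.dvd_of_dvd_pow hqi)]
  exact hP i hi

end MainTheorem

theorem stmt_9 (w n : ℕ) (hw : 2 ≤ w) (p : Fin n → ℕ) (hp : ∀ i, (p i).Prime)
    (hmono : StrictMono p) (hdvd : ∀ i, 2 * w - 2 ∣ p i - 1)
    (hCAC : ∀ i, ∃ C : Finset (Finset (ZMod (p i))),
      IsCAC (p i) w C ∧ (∀ S ∈ C, IsEquiDiff w S) ∧ C.card = (p i - 1) / (2 * w - 2))
    (hQ1 : ∀ i, @legendreSym (p i) ⟨hp i⟩ (-1) = -1)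
    (hQ2 : ∀ i, ∀ j : ℕ, 1 ≤ j → j ≤ w - 2 →
      @legendreSym (p i) ⟨hp i⟩ (j : ℤ) * @legendreSym (p i) ⟨hp i⟩ ((j : ℤ) - w + 1) = -1)
    (r : Fin n → ℕ) (hr : ∀ i, 0 < r i) :
    IsGreatest {k : ℕ | ∃ C : Finset (Finset (Fin 2 × ZMod ((w - 1) * ∏ i, p i ^ r i))),
        IsMCCAC 2 ((w - 1) * ∏ i, p i ^ r i) w C ∧ C.card = k}
      ((∏ i, p i ^ r i) + ((∏ i, p i ^ r i) - 1) / (w - 1)) := by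
  obtain ⟨k, rfl⟩ : ∃ k, w = k + 1 := ⟨w - 1, by lia⟩
  have hk : 0 < k := by lia
  have hlt : ∀ i, 2 * k < p i := fun i => by
    have := Nat.le_of_dvd (Nat.sub_pos_of_lt (hp i).one_lt) (hdvd i)
    lia
  have hsign : ∀ i, ∃ T : Set (ZMod (p i)), IsSignSplitting k T := fun i => by
    have : Fact (p i).Prime := ⟨hp i⟩
    refine exists_isSignSplitting_of_legendreSym (hQ1 i) fun j hj0 hjk => ?_
    simpa [sub_add_eq_sub_sub] using hQ2 i j hj0 (by lia)
  have hexact : ∀ i, ∃ T : Set (ZMod (p i)), IsExactSplitting (multipliers k) T :=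
    fun i => exists_isExactSplitting_of_prime (hp i) hk (hdvd i) (hCAC i)
  exact isGreatest_card_isMCCAC hk
    (forall_prime_dvd_prod_pow (fun i _ => hp i) fun i _ => hlt i)
    (forall_prime_dvd_prod_pow (fun i _ => hp i) fun i _ => hsign i)
    (forall_prime_dvd_prod_pow (fun i _ => hp i) fun i _ => hexact i)
end
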